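/- arXiv:2312.08930 — 10 statements merged into one kernel-verified Lean document; each statement's English description precedes it below -/
import Mathlib

section
/- Let Γ be a connected finite simple graph on n vertices and R an equivalence relation on its vertex set with k ≥ 3 distinct R-equivalence classes C₁, …, C_k of sizes n₁, …, n_k. Let ρ_{ij} = 1 if C_i and C_j are adjacent in the R-compressed graph of Γ and ρ_{ij} = 0 otherwise, and let N(0) be the k × k symmetric real matrix with (i,i)-entry n_i − 1 and (i,j)-entry √(n_i n_j)·ρ_{ij} for i ≠ j. Then the characteristic polynomial of the adjacency matrix of the R-super graph Γ^R satisfies χ(A(Γ^R), x) = χ(N(0), x) · (x + 1)^{n − k}. -/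
/-!
The vertices of a single `R`-class are pairwise adjacent in `Γ^R`, and adjacency between different
classes depends on the classes only. Hence `A(Γ^R) + I = P S Pᵀ`, where `S = N(0) + I` and `P` is the
matrix whose `i`-th column is the normalized indicator vector of the `i`-th class. These columns
are orthonormal, `Pᵀ P = I`, so comparing the characteristic polynomials of `(P S) Pᵀ` and
`Pᵀ (P S) = S` gives `χ(A + I, x) = x ^ (n - k) χ(S, x)`; substituting `x + 1` for `x` finishes.
-/

open Polynomial

noncomputable section
open scoped Classical

/-- The adjacency matrix (over ℝ) of a finite simple graph. -/
def adjMat {V : Type*} [Fintype V] (Γ : SimpleGraph V) : Matrix V V ℝ :=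
  fun u v => if Γ.Adj u v then 1 else 0

/-- The Laplacian matrix `D − A` of a finite simple graph, where `D` is the diagonal
matrix of vertex degrees. -/
def lapMat {V : Type*} [Fintype V] (Γ : SimpleGraph V) : Matrix V V ℝ :=
  Matrix.diagonal (fun v => ((Finset.univ.filter fun u => Γ.Adj v u).card : ℝ)) - adjMat Γ

/-- The `R`-super graph of `Γ`: two distinct vertices are adjacent iff they are
`R`-equivalent or some members of their respective `R`-classes are adjacent in `Γ`. -/
def superGraph {V : Type*} (Γ : SimpleGraph V) (R : Setoid V) : SimpleGraph V :=
  SimpleGraph.fromRel fun u v =>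
    R.r u v ∨ ∃ u' v', R.r u u' ∧ R.r v v' ∧ Γ.Adj u' v'

/-- The `R`-compressed graph of `Γ`, on the set of `R`-classes: two distinct classes are
adjacent iff some vertex of one is adjacent in `Γ` to some vertex of the other. -/
def compressedGraph {V : Type*} (Γ : SimpleGraph V) (R : Setoid V) :
    SimpleGraph (Quotient R) :=
  SimpleGraph.fromRel fun c d => ∃ x y, Quotient.mk R x = c ∧ Quotient.mk R y = d ∧ Γ.Adj x y

/-- The generalized join `I[K_{n i}]` of complete graphs along the graph `I`:
the vertex `i` of `I` is replaced by the complete graph on `Fin (n i)`, and all edges are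
put between the `i`-th and `j`-th complete graphs whenever `i` and `j` are adjacent in `I`. -/
def genJoinK {ι : Type*} (I : SimpleGraph ι) (n : ι → ℕ) : SimpleGraph (Σ i, Fin (n i)) :=
  SimpleGraph.fromRel fun a b => a.1 = b.1 ∨ I.Adj a.1 b.1

/-- The star graph `K_{1,k-1}` on `Fin k`, whose central vertex is the one with value `0`. -/
def starGraph (k : ℕ) : SimpleGraph (Fin k) :=
  SimpleGraph.fromRel fun a _b => a.val = 0

/-- The order super commuting graph `Δ^o(G)`: distinct `x, y` are adjacent iff
`o(x) = o(y)` or some distinct commuting `x', y'` satisfy `o(x') = o(x)` and `o(y') = o(y)`. -/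
def orderSuper (G : Type*) [Group G] : SimpleGraph G :=
  SimpleGraph.fromRel fun x y =>
    orderOf x = orderOf y ∨
      ∃ x' y' : G, x' ≠ y' ∧ x' * y' = y' * x' ∧ orderOf x' = orderOf x ∧ orderOf y' = orderOf y

/-- The conjugacy super commuting graph `Δ^c(G)`: distinct `x, y` are adjacent iff
`x` is conjugate to `y` or some distinct commuting `x', y'` are conjugate to `x` and `y`
respectively. -/
def conjSuper (G : Type*) [Group G] : SimpleGraph G :=
  SimpleGraph.fromRel fun x y =>
    IsConj x y ∨ ∃ x' y' : G, x' ≠ y' ∧ x' * y' = y' * x' ∧ IsConj x x' ∧ IsConj y y'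

open Matrix

/-- The normalized class indicator matrix: the column indexed by `i` is the indicator of the fibre
of `c` over `i`, divided by `√(n i)`. -/
def normInd {V ι : Type*} [DecidableEq ι] (c : V → ι) (n : ι → ℕ) : Matrix V ι ℝ :=
  Matrix.of fun v i => if c v = i then (Real.sqrt (n i))⁻¹ else 0

lemma normInd_orthonormal {V ι : Type*} [Fintype V] [Fintype ι] [DecidableEq ι] (c : V → ι) (n : ι → ℕ)
    (hn : ∀ i, n i = (Finset.univ.filter fun x => c x = i).card) (hpos : ∀ i, 0 < n i) :
    (normInd c n)ᵀ * normInd c n = 1 := by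
  ext i j
  simp only [Matrix.mul_apply, Matrix.transpose_apply, normInd, Matrix.of_apply, Matrix.one_apply]
  by_cases hij : i = j
  · subst hij
    have h0 : (n i : ℝ) ≠ 0 := by exact_mod_cast (hpos i).ne'
    have h1 : ∀ v, ((if c v = i then (Real.sqrt (n i))⁻¹ else 0) *
        (if c v = i then (Real.sqrt (n i))⁻¹ else 0) : ℝ) =
        if c v = i then (n i : ℝ)⁻¹ else 0 := by
      intro v
      split_ifs
      · rw [← mul_inv, Real.mul_self_sqrt (Nat.cast_nonneg _)]
      · simp
    simp_rw [h1]
    rw [← Finset.sum_filter, Finset.sum_const, ← hn i]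
    simp [h0]
  · rw [if_neg hij]
    refine Finset.sum_eq_zero fun v _ => ?_
    by_cases h : c v = i
    · have : c v ≠ j := fun h' => hij (h.symm.trans h')
      simp [this]
    · simp [h]

lemma normInd_conj_apply {V ι : Type*} [Fintype ι] [DecidableEq ι] (c : V → ι) (n : ι → ℕ)
    (S : Matrix ι ι ℝ) (u v : V) :
    (normInd c n * S * (normInd c n)ᵀ) u v =
      (Real.sqrt (n (c u)))⁻¹ * S (c u) (c v) * (Real.sqrt (n (c v)))⁻¹ := by
  simp [Matrix.mul_apply, normInd]

lemma superGraph_adj_iff {V : Type*} (Γ : SimpleGraph V) (R : Setoid V) (u v : V) :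
    (superGraph Γ R).Adj u v ↔ u ≠ v ∧ (Quotient.mk R u = Quotient.mk R v ∨
      (compressedGraph Γ R).Adj (Quotient.mk R u) (Quotient.mk R v)) := by
  have key : ∀ a b : V, (∃ x y, Quotient.mk R x = Quotient.mk R a ∧
      Quotient.mk R y = Quotient.mk R b ∧ Γ.Adj x y) ↔
      ∃ x y, R.r a x ∧ R.r b y ∧ Γ.Adj x y := by
    intro a b
    have hq : ∀ s t : V, Quotient.mk R s = Quotient.mk R t ↔ R.r t s := fun s t =>
      Quotient.eq.trans ⟨fun h => R.symm h, fun h => R.symm h⟩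
    simp only [hq]
  have hq : Quotient.mk R u = Quotient.mk R v ↔ R.r u v := Quotient.eq
  have hs : R.r v u ↔ R.r u v := ⟨fun h => R.symm h, fun h => R.symm h⟩
  simp only [superGraph, compressedGraph, SimpleGraph.fromRel_adj, key, ne_eq, hq, hs]
  tauto

/-- Substituting `X + 1` turns the characteristic polynomial of `M + 1` into that of `M`. -/
lemma charpoly_add_one_comp {ι : Type*} [Fintype ι] [DecidableEq ι] (M : Matrix ι ι ℝ) :
    (M + 1).charpoly.comp (X + 1) = M.charpoly := by
  have h := Matrix.charpoly_sub_scalar (M + 1) 1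
  simp only [map_one, add_sub_cancel_right] at h
  exact h.symm

/-- Adjacency characteristic polynomial of the `R`-super graph of a connected graph `Γ`:
`χ(A(Γ^R), x) = χ(N(0), x) · (x + 1)^(n − k)`, where the `R`-classes are enumerated by
`e : Fin k ≃ Quotient R`, `n i` is the size of the `i`-th class, and `N(0)` has diagonal
entries `n i − 1` and off-diagonal entries `√(n i · n j) · ρ_{ij}`. -/
theorem stmt_3 {V : Type*} [Fintype V] (Γ : SimpleGraph V) (R : Setoid V)
    (hconn : Γ.Connected) (k : ℕ) (hk : 3 ≤ k) (e : Fin k ≃ Quotient R)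
    (n : Fin k → ℕ)
    (hn : ∀ i, n i = (Finset.univ.filter fun x => Quotient.mk R x = e i).card) :
    (adjMat (superGraph Γ R)).charpoly =
      (Matrix.of fun i j : Fin k =>
          if i = j then (n i : ℝ) - 1
          else if (compressedGraph Γ R).Adj (e i) (e j) then
            Real.sqrt ((n i : ℝ) * (n j : ℝ))
          else 0).charpoly *
        (X + 1) ^ (Fintype.card V - k) := by
  set N : Matrix (Fin k) (Fin k) ℝ := Matrix.of fun i j : Fin k =>
          if i = j then (n i : ℝ) - 1
          else if (compressedGraph Γ R).Adj (e i) (e j) then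
            Real.sqrt ((n i : ℝ) * (n j : ℝ))
          else 0 with hN
  let c : V → Fin k := fun v => e.symm (Quotient.mk R v)
  have hec : ∀ v, e (c v) = Quotient.mk R v := fun v => e.apply_symm_apply _
  have hn' : ∀ i, n i = (Finset.univ.filter fun x => c x = i).card := by
    intro i
    rw [hn i]
    congr 1
    ext x
    simp [c, Equiv.symm_apply_eq]
  have hsurj : Function.Surjective c := fun i => by
    obtain ⟨v, hv⟩ := Quotient.exists_rep (e i)
    exact ⟨v, e.symm_apply_eq.mpr hv⟩
  have hpos : ∀ i, 0 < n i := fun i => by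
    obtain ⟨v, hv⟩ := hsurj i
    rw [hn' i]
    exact Finset.card_pos.mpr ⟨v, by simp [hv]⟩
  have hfac : adjMat (superGraph Γ R) + 1 =
      normInd c n * (N + 1) * (normInd c n)ᵀ := by
    ext u v
    have hpu : (0 : ℝ) < n (c u) := by exact_mod_cast hpos _
    have hpv : (0 : ℝ) < n (c v) := by exact_mod_cast hpos _
    have hu : Real.sqrt (n (c u)) ≠ 0 := (Real.sqrt_pos.mpr hpu).ne'
    have hv : Real.sqrt (n (c v)) ≠ 0 := (Real.sqrt_pos.mpr hpv).ne'
    have hcc : c u = c v ↔ Quotient.mk R u = Quotient.mk R v := e.symm.injective.eq_iff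
    rw [normInd_conj_apply]
    simp only [Matrix.add_apply, Matrix.one_apply, adjMat, superGraph_adj_iff, hN,
      Matrix.of_apply, hec]
    by_cases h : c u = c v
    · -- Within a class, `A + I` is the all-ones block, including the diagonal.
      have h1 := hcc.mp h
      have hs : Real.sqrt (n (c v)) * Real.sqrt (n (c v)) = n (c v) :=
        Real.mul_self_sqrt hpv.le
      rw [h]
      by_cases huv : u = v
      · simp only [huv, if_true, ne_eq, not_true, false_and, if_false]
        field_simp
        linarith
      · simp only [huv, h1, if_true, ne_eq, not_false_eq_true, true_and, true_or, if_false]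
        field_simp
        linarith
    · have h1 : Quotient.mk R u ≠ Quotient.mk R v := fun h' => h (hcc.mpr h')
      have huv : u ≠ v := fun h' => h1 (by rw [h'])
      by_cases ha : (compressedGraph Γ R).Adj (Quotient.mk R u) (Quotient.mk R v)
      · simp only [h, huv, ha, ne_eq, not_false_eq_true, true_and, or_true, if_true, if_false,
          Real.sqrt_mul hpu.le]
        field_simp
        ring
      · simp [h, huv, ha, h1]
  have hle : Fintype.card (Fin k) ≤ Fintype.card V := Fintype.card_le_of_surjective c hsurj
  have hcp := Matrix.charpoly_mul_comm_of_le (normInd c n * (N + 1)) (normInd c n)ᵀ hle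
  rw [← hfac, ← Matrix.mul_assoc, normInd_orthonormal c n hn' hpos, Matrix.one_mul,
    Fintype.card_fin] at hcp
  rw [← charpoly_add_one_comp, hcp, Polynomial.mul_comp, charpoly_add_one_comp,
    Polynomial.X_pow_comp, mul_comm]
end
end

section
/- Let k ≥ 3 and let Γ be the generalized join K_{1,k−1}[K_l, K_m, …, K_m], where the star K_{1,k−1} has central vertex replaced by K_l and the k − 1 pendant vertices each replaced by K_m. Then the eigenvalues of the adjacency matrix of Γ are: (m + l − 2 − √(m² + l² + (4k−6)ml))/2 with multiplicity 1, −1 with multiplicity m(k−1) + l − k, m − 1 with multiplicity k − 2, and (m + l − 2 + √(m² + l² + (4k−6)ml))/2 with multiplicity 1. -/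
/-!
Write `n` for the vector of sizes of the complete graphs. Two vertices `v, w` of the generalized
join are equal or adjacent iff their blocks are equal or adjacent, so `A + 1` factors through the
`k`-dimensional space of functions on the blocks. Sylvester's identity (the characteristic
polynomials of `P * Q` and `Q * P` agree up to a power of `X`) reduces its characteristic polynomial
to that of the `k × k` quotient matrix with entries `n i * B i j`, where `B` is the adjacency matrix
of the star plus the identity (`charpoly_genJoinK`).

For the star, the quotient matrix minus `m` has rank at most two: it vanishes off the row and column
of the centre. Sylvester's identity again reduces it to the `2 × 2` matrix `!![l - m, l(k-1); m, 0]`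
(`charpoly_starQuotient`), and undoing the two shifts gives the quadratic whose roots are the two
simple eigenvalues.
-/

open Polynomial

noncomputable section
open scoped Classical

/-- The quotient matrix of the generalized join: `n i` if the blocks `i`, `j` are equal or
adjacent, and `0` otherwise. -/
def quotMat {ι : Type*} (I : SimpleGraph ι) (n : ι → ℕ) : Matrix ι ι ℝ :=
  fun i j => if i = j ∨ I.Adj i j then (n i : ℝ) else 0

/-- Positivity of the block sizes ensures that the exponent of `X + 1` does not truncate. -/
theorem charpoly_genJoinK {ι : Type*} [Fintype ι] [DecidableEq ι] (I : SimpleGraph ι) (n : ι → ℕ)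
    (hn : ∀ i, 1 ≤ n i) :
    (adjMat (genJoinK I n)).charpoly =
      (X + 1) ^ (∑ i, n i - Fintype.card ι) * (quotMat I n).charpoly.comp (X + 1) := by
  let P : Matrix (Σ i, Fin (n i)) ι ℝ := fun v j => if v.1 = j ∨ I.Adj v.1 j then 1 else 0
  let Q : Matrix ι (Σ i, Fin (n i)) ℝ := fun i w => if i = w.1 then 1 else 0
  have hA : adjMat (genJoinK I n) = P * Q - Matrix.scalar _ 1 := by
    ext v w
    have hPQ : (P * Q) v w = if v.1 = w.1 ∨ I.Adj v.1 w.1 then 1 else 0 := by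
      rw [Matrix.mul_apply]
      simp [P, Q]
    rw [Matrix.sub_apply, hPQ]
    by_cases hvw : v = w
    · subst hvw
      simp [adjMat]
    · have : (genJoinK I n).Adj v w ↔ (v.1 = w.1 ∨ I.Adj v.1 w.1) := by
        simp only [genJoinK, SimpleGraph.fromRel_adj, I.adj_comm w.1, eq_comm (a := w.1), or_self]
        simp [hvw]
      simp [adjMat, this, hvw]
  have hQP : Q * P = quotMat I n := by
    ext i j
    rw [Matrix.mul_apply, Fintype.sum_sigma, Finset.sum_eq_single i]
    · simp [P, Q, quotMat]
    · intro b _ hb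
      simp [Q, hb.symm]
    · simp
  have hcard : Fintype.card (Σ i, Fin (n i)) = ∑ i, n i := by simp
  have hle : Fintype.card ι ≤ Fintype.card (Σ i, Fin (n i)) := by
    rw [hcard]
    simpa using Finset.sum_le_sum fun i (_ : i ∈ Finset.univ) => hn i
  rw [hA, Matrix.charpoly_sub_scalar, Matrix.charpoly_mul_comm_of_le _ _ hle, hQP, hcard]
  simp

/-- The characteristic polynomial of the quotient matrix for the star, expanded around `m`. -/
theorem charpoly_starQuotient (k l m : ℕ) (hk : 2 ≤ k) :
    (quotMat (starGraph k) (fun i => if i.val = 0 then l else m)).charpoly =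
      (X - C (m : ℝ)) ^ (k - 2) * ((X - C (m : ℝ)) ^ 2 - C ((l : ℝ) - m) * (X - C (m : ℝ))
        - C (((k : ℝ) - 1) * m * l)) := by
  obtain ⟨k, rfl⟩ : ∃ j, k = j + 1 := ⟨k - 1, by omega⟩
  -- The columns of `U` are the indicators of the centre and of the set of pendant vertices.
  let U : Matrix (Fin (k + 1)) (Fin 2) ℝ :=
    fun i => ![if i = 0 then 1 else 0, if i = 0 then 0 else 1]
  let V : Matrix (Fin 2) (Fin (k + 1)) ℝ :=
    ![fun j => if j = 0 then (l : ℝ) - m else l, fun j => if j = 0 then (m : ℝ) else 0]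
  have hM : quotMat (starGraph (k + 1)) (fun i => if i.val = 0 then l else m) =
      U * V - Matrix.scalar _ (-(m : ℝ)) := by
    ext i j
    rw [Matrix.sub_apply, Matrix.mul_apply, Fin.sum_univ_two]
    by_cases hi : i = 0 <;> by_cases hj : j = 0 <;> by_cases hij : i = j <;>
      simp_all [quotMat, starGraph, U, V]
  have hVU : V * U = !![(l : ℝ) - m, k * l; m, 0] := by
    ext a b
    rw [Matrix.mul_apply]
    fin_cases a <;> fin_cases b <;>
      simp [U, V, Fin.sum_univ_succ, Fin.succ_ne_zero]
  rw [hM, Matrix.charpoly_sub_scalar, Matrix.charpoly_mul_comm_of_le _ _ (by simpa using hk), hVU,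
    Matrix.charpoly_fin_two]
  simp [Matrix.trace_fin_two, Matrix.det_fin_two]
  ring

/-- Adjacency spectrum of the generalized join `K_{1,k−1}[K_l, K_m, …, K_m]`, where the
central vertex of the star is replaced by `K_l` and each pendant vertex by `K_m`:
the eigenvalues are `(m+l−2 ∓ √(m²+l²+(4k−6)ml))/2` each with multiplicity 1, `−1` with
multiplicity `m(k−1)+l−k`, and `m−1` with multiplicity `k−2`. -/
theorem stmt_6 (k l m : ℕ) (hk : 3 ≤ k) (hl : 1 ≤ l) (hm : 1 ≤ m) :
    (adjMat (genJoinK (starGraph k) (fun i => if i.val = 0 then l else m))).charpoly =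
      (X - C (((m : ℝ) + l - 2 - Real.sqrt ((m : ℝ) ^ 2 + (l : ℝ) ^ 2 +
          (4 * (k : ℝ) - 6) * m * l)) / 2)) *
        (X + 1) ^ (m * (k - 1) + l - k) *
        (X - C ((m : ℝ) - 1)) ^ (k - 2) *
        (X - C (((m : ℝ) + l - 2 + Real.sqrt ((m : ℝ) ^ 2 + (l : ℝ) ^ 2 +
          (4 * (k : ℝ) - 6) * m * l)) / 2)) := by
  set s := Real.sqrt ((m : ℝ) ^ 2 + (l : ℝ) ^ 2 + (4 * (k : ℝ) - 6) * m * l) with hs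
  have hk' : (3 : ℝ) ≤ k := by exact_mod_cast hk
  have hs2 : s ^ 2 = (m : ℝ) ^ 2 + (l : ℝ) ^ 2 + (4 * (k : ℝ) - 6) * m * l := by
    have : (0 : ℝ) ≤ 4 * (k : ℝ) - 6 := by linarith
    exact Real.sq_sqrt (by positivity)
  have hsum : ∑ i : Fin k, (if i.val = 0 then l else m) = m * (k - 1) + l := by
    obtain ⟨k, rfl⟩ : ∃ j, k = j + 1 := ⟨k - 1, by omega⟩
    simp [Fin.sum_univ_succ]
    ring
  rw [charpoly_genJoinK _ _ (fun i => by split_ifs <;> assumption),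
    charpoly_starQuotient k l m (by omega), hsum, Fintype.card_fin]
  have hquad : ((X - C (m : ℝ)) ^ 2 - C ((l : ℝ) - m) * (X - C (m : ℝ))
        - C (((k : ℝ) - 1) * m * l)).comp (X + 1) =
      (X - C (((m : ℝ) + l - 2 - s) / 2)) * (X - C (((m : ℝ) + l - 2 + s) / 2)) := by
    refine Polynomial.funext fun x => ?_
    simp only [eval_comp, eval_sub, eval_mul, eval_pow, eval_X, eval_C, eval_add, eval_one]
    linear_combination (1 / 4 : ℝ) * hs2
  have hlin : (X - C (m : ℝ)).comp (X + 1) = X - C ((m : ℝ) - 1) := by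
    simp only [sub_comp, X_comp, C_comp, C_sub, C_1]
    ring
  rw [mul_comp, pow_comp, hquad, hlin]
  ring
end
end

section
/- Let k ≥ 3 and let Γ be the generalized join K_{1,k−1}[K_{n₁}, K_{n₂}, …, K_{n_k}], where the star K_{1,k−1} has vertices v₁, …, v_k with v₁ the central vertex, and n = n₁ + n₂ + ⋯ + n_k. Set N₁ = n − n₁ and N_i = n₁ for 2 ≤ i ≤ k. Then the characteristic polynomial of the Laplacian matrix of Γ is χ(L(Γ), x) = x · (x − n) · (x − n₁)^{k−2} · ∏_{i=1}^{k} (x − N_i − n_i)^{n_i − 1}. -/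
/-!
Let `M = I + A(K_{1,k-1})` and let `δ_i = x - N_i - n_i`. A vertex in the `i`-th clique has degree
`N_i + n_i - 1`, so `x I - L(Γ)` has `(a, b)` entry `[a = b] δ_{a.1} + M a.1 b.1`: a diagonal
matrix plus a matrix factoring through `ℝ^k`. The identity `det (1 + U W) = det (1 + W U)` reduces
its determinant to `∏ δ_i ^ (n_i - 1)` times the `k × k` determinant of `diag δ + diag n * M`
(`det_blowup`). That matrix is an arrow matrix, `(x - n₁) I` plus a matrix of rank two, so the same
identity reduces it to a `2 × 2` determinant (`det_arrow`), giving `x (x - n) (x - n₁)^(k-2)`.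
The divisions are legitimate for every real `x > n`, and two polynomials that agree at infinitely
many points are equal.
-/

open Polynomial

noncomputable section
open scoped Classical

lemma det_diagonal_add_mul {V W : Type*} [Fintype V] [DecidableEq V] [Fintype W] [DecidableEq W]
    (d : V → ℝ) (hd : ∀ v, d v ≠ 0) (A : Matrix V W ℝ) (B : Matrix W V ℝ) :
    (Matrix.diagonal d + A * B).det =
      (∏ v, d v) * (1 + B * (Matrix.diagonal (fun v => (d v)⁻¹) * A)).det := by
  have h : Matrix.diagonal d + A * B =
      Matrix.diagonal d * (1 + (Matrix.diagonal (fun v => (d v)⁻¹) * A) * B) := by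
    have h1 : Matrix.diagonal d * Matrix.diagonal (fun v => (d v)⁻¹) = 1 := by
      rw [Matrix.diagonal_mul_diagonal, ← Matrix.diagonal_one]
      congr 1
      funext v
      exact mul_inv_cancel₀ (hd v)
    rw [mul_add, mul_one, Matrix.mul_assoc, ← Matrix.mul_assoc (Matrix.diagonal d), h1,
      Matrix.one_mul]
  rw [h, Matrix.det_mul, Matrix.det_diagonal, Matrix.det_one_add_mul_comm]

/-- Reduction of the determinant of a matrix that is constant on blocks, up to a diagonal constant
on each block, to the determinant of the quotient matrix. -/
lemma det_blowup {ι : Type*} [Fintype ι] [DecidableEq ι] (n : ι → ℕ) (hn : ∀ i, 1 ≤ n i)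
    [DecidableEq (Σ i, Fin (n i))]
    (δ : ι → ℝ) (hδ : ∀ i, δ i ≠ 0) (M : Matrix ι ι ℝ) :
    (Matrix.diagonal (fun a : Σ i, Fin (n i) => δ a.1) +
      Matrix.of (fun a b : Σ i, Fin (n i) => M a.1 b.1)).det =
      (∏ i, δ i ^ (n i - 1)) *
        (Matrix.diagonal δ + Matrix.diagonal (fun i => (n i : ℝ)) * M).det := by
  have hfac : (Matrix.of (fun a b : Σ i, Fin (n i) => M a.1 b.1)) =
      (Matrix.of (fun (a : Σ i, Fin (n i)) j => M a.1 j)) *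
      (Matrix.of (fun j (b : Σ i, Fin (n i)) => if b.1 = j then (1 : ℝ) else 0)) := by
    ext a b
    simp [Matrix.mul_apply]
  have hq : (Matrix.of (fun j (b : Σ i, Fin (n i)) => if b.1 = j then (1 : ℝ) else 0)) *
      (Matrix.diagonal (fun a : Σ i, Fin (n i) => (δ a.1)⁻¹) *
        (Matrix.of (fun (a : Σ i, Fin (n i)) j => M a.1 j))) =
      Matrix.diagonal (fun i => (n i : ℝ) * (δ i)⁻¹) * M := by
    ext i j
    rw [Matrix.mul_apply, Fintype.sum_sigma]
    simp [Matrix.diagonal_mul, mul_assoc]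
  have hQ : Matrix.diagonal δ + Matrix.diagonal (fun i => (n i : ℝ)) * M =
      Matrix.diagonal δ * (1 + Matrix.diagonal (fun i => (n i : ℝ) * (δ i)⁻¹) * M) := by
    rw [mul_add, mul_one, ← Matrix.mul_assoc, Matrix.diagonal_mul_diagonal]
    congr 3
    funext i
    field_simp [hδ i]
  rw [hfac, det_diagonal_add_mul (fun a : Σ i, Fin (n i) => δ a.1) (fun a => hδ a.1), hq, hQ,
    Matrix.det_mul, Matrix.det_diagonal, ← mul_assoc, ← Finset.prod_mul_distrib, Fintype.prod_sigma]
  congr 1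
  refine Finset.prod_congr rfl fun i _ => ?_
  dsimp only
  rw [Finset.prod_const, Finset.card_univ, Fintype.card_fin, ← pow_succ, Nat.sub_add_cancel (hn i)]

/-- Closed neighbourhood matrix `I + A` of the star with centre `c`. -/
def starMat {ι : Type*} (c : ι) : Matrix ι ι ℝ :=
  Matrix.of fun i j => if i = j ∨ i = c ∨ j = c then 1 else 0

/-- Determinant of the quotient matrix, an arrow matrix with diagonal `x - n₁` away from
the centre. -/
lemma det_arrow {ι : Type*} [Fintype ι] [DecidableEq ι] (hk : 2 ≤ Fintype.card ι) (c : ι)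
    (n : ι → ℝ) (x s : ℝ) (hs : s = ∑ i, n i) (hx : x - n c ≠ 0) :
    (Matrix.diagonal (fun i => x - ((if i = c then s - n c else n c) + n i)) +
      Matrix.diagonal n * starMat c).det =
      x * (x - s) * (x - n c) ^ (Fintype.card ι - 2) := by
  have hsum : ∑ i, (if i = c then 0 else n i) = s - n c := by
    rw [hs, ← Finset.add_sum_erase _ n (Finset.mem_univ c),
      ← Finset.add_sum_erase _ (fun i => if i = c then 0 else n i) (Finset.mem_univ c)]
    simp only [if_true, zero_add, add_sub_cancel_left]
    exact Finset.sum_congr rfl fun i hi => if_neg (Finset.ne_of_mem_erase hi)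
  let U : Matrix ι (Fin 2) ℝ :=
    Matrix.of fun i => ![if i = c then 1 else 0, if i = c then 0 else n i]
  let W : Matrix (Fin 2) ι ℝ :=
    Matrix.of ![fun j => if j = c then 2 * n c - s else n c, fun j => if j = c then 1 else 0]
  have hfac : Matrix.diagonal (fun i => x - ((if i = c then s - n c else n c) + n i)) +
      Matrix.diagonal n * starMat c = Matrix.diagonal (fun _ => x - n c) + U * W := by
    ext i j
    rw [Matrix.add_apply, Matrix.diagonal_mul, Matrix.add_apply, Matrix.mul_apply,
      Fin.sum_univ_two]
    by_cases hij : i = j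
    · subst hij
      by_cases hi : i = c
      · subst hi
        simp [U, W, starMat]
        ring
      · simp [U, W, starMat, hi]
        ring
    · by_cases hi : i = c
      · have hj : j ≠ c := fun h => hij (hi.trans h.symm)
        subst hi
        simp [U, W, starMat, hij, hj]
      · by_cases hj : j = c
        · simp [U, W, starMat, hi, hj]
        · simp [U, W, starMat, hij, hi, hj]
  have hsum' : ∑ i, (if i = c then 2 * n c - s else n c) *
      ((x - n c)⁻¹ * (if i = c then 0 else n i)) = n c * (x - n c)⁻¹ * (s - n c) := by
    rw [← hsum, Finset.mul_sum]
    refine Finset.sum_congr rfl fun i _ => ?_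
    split_ifs <;> ring
  have h00 : (W * ((Matrix.diagonal (fun _ => (x - n c)⁻¹) : Matrix ι ι ℝ) * U)) 0 0 =
      (2 * n c - s) * (x - n c)⁻¹ := by
    rw [Matrix.mul_apply]
    simp [U, W, Matrix.diagonal_mul]
  have h01 : (W * ((Matrix.diagonal (fun _ => (x - n c)⁻¹) : Matrix ι ι ℝ) * U)) 0 1 =
      n c * (x - n c)⁻¹ * (s - n c) := by
    rw [← hsum', Matrix.mul_apply]
    refine Finset.sum_congr rfl fun i _ => ?_
    simp [U, W, Matrix.diagonal_mul]
  have h10 : (W * ((Matrix.diagonal (fun _ => (x - n c)⁻¹) : Matrix ι ι ℝ) * U)) 1 0 = (x - n c)⁻¹ := by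
    rw [Matrix.mul_apply]
    simp [U, W, Matrix.diagonal_mul]
  have h11 : (W * ((Matrix.diagonal (fun _ => (x - n c)⁻¹) : Matrix ι ι ℝ) * U)) 1 1 = 0 := by
    rw [Matrix.mul_apply]
    refine Finset.sum_eq_zero fun i _ => ?_
    by_cases hi : i = c <;> simp [U, W, Matrix.diagonal_mul, hi]
  rw [hfac, det_diagonal_add_mul _ (fun _ => hx), Matrix.det_fin_two]
  simp only [Matrix.add_apply, h00, h01, h10, h11, Finset.prod_const, Finset.card_univ]
  obtain ⟨m, hm⟩ := Nat.exists_eq_add_of_le' hk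
  rw [hm, Nat.add_sub_cancel, pow_add]
  simp
  field_simp
  ring

/-- Adjacency in the join: `A(Γ) + I` is the blow-up of the closed neighbourhood matrix of
the star. -/
lemma genJoinK_adj_ite {k : ℕ} (n : Fin k → ℕ) (c : Fin k) (hc : c.val = 0)
    (a b : Σ i, Fin (n i)) :
    (if (genJoinK (starGraph k) n).Adj a b then (1 : ℝ) else 0) =
      starMat c a.1 b.1 - if a = b then 1 else 0 := by
  have hz : ∀ i : Fin k, i.val = 0 ↔ i = c := fun i => by rw [Fin.ext_iff, hc]
  by_cases hab : a = b
  · subst hab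
    simp [starMat]
  · have : (genJoinK (starGraph k) n).Adj a b ↔ (a.1 = b.1 ∨ a.1 = c ∨ b.1 = c) := by
      simp only [genJoinK, starGraph, SimpleGraph.fromRel_adj, hz]
      grind
    simp [starMat, this, hab]

lemma sum_starMat {k : ℕ} (n : Fin k → ℕ) (c i : Fin k) :
    ∑ j, (n j : ℝ) * starMat c i j =
      ((if i = c then (∑ j, n j) - n c else n c : ℕ) : ℝ) + (n i : ℝ) := by
  have hle : n c ≤ ∑ j, n j := Finset.single_le_sum (fun _ _ => Nat.zero_le _) (Finset.mem_univ c)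
  by_cases hi : i = c
  · subst hi
    simp [starMat, Nat.cast_sub hle]
  · have h : ∀ j, (n j : ℝ) * starMat c i j =
        (if c = j then (n j : ℝ) else 0) + (if i = j then (n j : ℝ) else 0) := fun j => by
      by_cases h1 : i = j
      · subst h1
        simp [starMat, Ne.symm hi]
      · by_cases h2 : j = c
        · subst h2
          simp [starMat, hi]
        · simp [starMat, h1, hi, h2, Ne.symm h2]
    simp [h, Finset.sum_add_distrib, hi]

lemma scalar_sub_lapMat {k : ℕ} (n : Fin k → ℕ) (c : Fin k) (hc : c.val = 0) (x : ℝ) :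
    Matrix.scalar _ x - lapMat (genJoinK (starGraph k) n) =
      Matrix.diagonal (fun a : Σ i, Fin (n i) =>
        x - (((if a.1 = c then (∑ j, n j) - n c else n c : ℕ) : ℝ) + (n a.1 : ℝ))) +
      Matrix.of (fun a b : Σ i, Fin (n i) => starMat c a.1 b.1) := by
  have hdeg : ∀ a : Σ i, Fin (n i),
      ((Finset.univ.filter fun u => (genJoinK (starGraph k) n).Adj a u).card : ℝ) =
      ((if a.1 = c then (∑ j, n j) - n c else n c : ℕ) : ℝ) + (n a.1 : ℝ) - 1 := fun a => by
    rw [← sum_starMat, Finset.card_filter, Nat.cast_sum]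
    simp only [Nat.cast_ite, Nat.cast_one, Nat.cast_zero, genJoinK_adj_ite n c hc]
    rw [Finset.sum_sub_distrib, Fintype.sum_sigma]
    simp
  ext a b
  simp only [lapMat, adjMat, Matrix.sub_apply, Matrix.add_apply, Matrix.scalar_apply,
    Matrix.diagonal_apply, Matrix.of_apply, hdeg, genJoinK_adj_ite n c hc]
  split_ifs <;> ring

/-- Laplacian characteristic polynomial of the generalized join
`K_{1,k−1}[K_{n₁}, …, K_{n_k}]` of complete graphs along a star with central vertex `v₁`:
`χ(L(Γ), x) = x (x − n) (x − n₁)^{k−2} ∏ᵢ (x − Nᵢ − nᵢ)^{nᵢ−1}` with `N₁ = n − n₁` and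
`Nᵢ = n₁` for the pendant vertices. -/
theorem stmt_7 (k : ℕ) (hk : 3 ≤ k) (n : Fin k → ℕ) (hn : ∀ i, 1 ≤ n i)
    (v₁ : Fin k) (hv : v₁.val = 0) :
    (lapMat (genJoinK (starGraph k) n)).charpoly =
      X * (X - C ((∑ i, n i : ℕ) : ℝ)) * (X - C ((n v₁ : ℝ))) ^ (k - 2) *
        ∏ i, (X - C (((if i = v₁ then (∑ j, n j) - n v₁ else n v₁ : ℕ) : ℝ) + (n i : ℝ)))
          ^ (n i - 1) := by
  have hle : ∀ i, (if i = v₁ then (∑ j, n j) - n v₁ else n v₁) + n i ≤ ∑ j, n j := fun i => by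
    have hv1 : n v₁ ≤ ∑ j, n j :=
      Finset.single_le_sum (fun _ _ => Nat.zero_le _) (Finset.mem_univ v₁)
    split_ifs with h
    · subst h
      omega
    · rw [← Finset.sum_pair (f := n) (Ne.symm h)]
      exact Finset.sum_le_sum_of_subset (Finset.subset_univ _)
  refine Polynomial.eq_of_infinite_eval_eq _ _
    ((Set.Ioi_infinite ((∑ i, n i : ℕ) : ℝ)).mono fun x hx => ?_)
  have hx' : ((∑ i, n i : ℕ) : ℝ) < x := hx
  have hδ : ∀ i, x - (((if i = v₁ then (∑ j, n j) - n v₁ else n v₁ : ℕ) : ℝ) + (n i : ℝ)) ≠ 0 :=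
    fun i => by
      have : (((if i = v₁ then (∑ j, n j) - n v₁ else n v₁ : ℕ) : ℝ) + (n i : ℝ)) ≤
          ((∑ i, n i : ℕ) : ℝ) := by exact_mod_cast hle i
      exact (sub_pos.mpr (this.trans_lt hx')).ne'
  have hv1 : n v₁ ≤ ∑ j, n j :=
    Finset.single_le_sum (fun _ _ => Nat.zero_le _) (Finset.mem_univ v₁)
  have hc : x - (n v₁ : ℝ) ≠ 0 :=
    (sub_pos.mpr ((Nat.cast_le (α := ℝ).mpr hv1).trans_lt hx')).ne'
  have harrow := det_arrow (by simp; omega) v₁ (fun i => (n i : ℝ)) x ((∑ i, n i : ℕ) : ℝ)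
    (by push_cast; rfl) hc
  have hblow := det_blowup n hn _ hδ (starMat v₁)
  simp only [Nat.cast_ite, Nat.cast_sub hv1] at hblow
  rw [harrow, Fintype.card_fin] at hblow
  have hscalar := scalar_sub_lapMat n v₁ hv x
  simp only [Nat.cast_ite, Nat.cast_sub hv1] at hscalar
  show Polynomial.eval x _ = Polynomial.eval x _
  rw [Matrix.eval_charpoly, hscalar, hblow]
  simp only [eval_mul, eval_sub, eval_X, eval_C, eval_pow, eval_prod, Nat.cast_ite,
    Nat.cast_sub hv1]
  ring
end
end

section
/- Let n ≥ 3 be odd and let D_{2n} be the dihedral group of order 2n. Then the characteristic polynomial of the adjacency matrix of the order super commuting graph Δ^o(D_{2n}) is χ(A(Δ^o(D_{2n})), x) = (x + 1)^{2n−3} · [x³ − (2n − 3)x² + (n² − 5n + 3)x + (2n² − 4n + 1)]. Moreover, Δ^o(D_{2n}) has eigenvalue −1 with multiplicity 2n − 3, and the three remaining simple eigenvalues α < β < γ satisfy −2 < α < −1, n − 2 < β < n − 1, and n < γ < n + 1. -/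
/-!
For odd `n`, a rotation of `D_{2n}` has odd order and a reflection has order `2`, and a reflection
commutes with no nontrivial rotation. Hence `Δ^o(D_{2n})` consists of two cliques, the `n` rotations
and the `n` reflections together with the identity, that share exactly the identity
(`r_adj_r`, `sr_adj_sr`, `r_adj_sr`).

Consequently `A + I = B * B'` with `B` of size `2n × 3` (`adjMat_eq`). Since `B * B'` and the
`3 × 3` matrix `B' * B` have the same characteristic polynomial up to the factor `X ^ (2n - 3)`,
substituting `X + 1` for `X` gives the formula (`charpoly_orderSuper`). The roots of the cubic
factor are located by the intermediate value theorem, and three distinct roots determine a monic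
cubic (`cubic_roots`, `cubic_eq_of_roots`).
-/

open Polynomial

noncomputable section
open scoped Classical

open DihedralGroup

lemma odd_orderOf_r {n : ℕ} (hodd : Odd n) (i : ZMod n) : Odd (orderOf (r i)) := by
  refine hodd.of_dvd_nat (orderOf_dvd_of_pow_eq_one ?_)
  simp [r_pow]

lemma r_adj_r {n : ℕ} (i j : ZMod n) :
    (orderSuper (DihedralGroup n)).Adj (r i) (r j) ↔ i ≠ j := by
  simp only [orderSuper, SimpleGraph.fromRel_adj, ne_eq, r.injEq]
  refine ⟨fun h => h.1, fun h => ⟨h, Or.inl (Or.inr ⟨r i, r j, by simpa using h, ?_, rfl, rfl⟩)⟩⟩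
  simp [add_comm]

lemma sr_adj_sr {n : ℕ} (i j : ZMod n) :
    (orderSuper (DihedralGroup n)).Adj (sr i) (sr j) ↔ i ≠ j := by
  simp [orderSuper, SimpleGraph.fromRel_adj, orderOf_sr]

/-- For odd `n`, a reflection commutes with no nontrivial rotation. -/
lemma eq_zero_of_r_mul_sr_comm {n : ℕ} (hodd : Odd n) {i j : ZMod n}
    (h : r i * sr j = sr j * r i) : i = 0 := by
  simp only [r_mul_sr, sr_mul_r, sr.injEq] at h
  have h2 : (2 : ℕ) * i = 0 := by push_cast; linear_combination -h
  have hu : IsUnit ((2 : ℕ) : ZMod n) :=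
    (ZMod.isUnit_iff_coprime 2 n).2 (Nat.coprime_two_left.2 hodd)
  exact hu.mul_right_eq_zero.1 h2

/-- Elements with the orders of `r i` and `sr j` are again a rotation and a reflection, so for odd
`n` passing to elements of equal order creates no edge between nontrivial rotations and
reflections. -/
lemma eq_zero_of_comm {n : ℕ} (hodd : Odd n) {i j : ZMod n} {x y : DihedralGroup n}
    (hxy : x * y = y * x) (hx : orderOf x = orderOf (r i)) (hy : orderOf y = orderOf (sr j)) :
    i = 0 := by
  have hi := odd_orderOf_r hodd i
  rw [orderOf_sr] at hy
  cases x with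
  | sr k => rw [orderOf_sr] at hx; rw [← hx] at hi; exact absurd hi (by decide)
  | r k =>
    cases y with
    | r l => have hl := odd_orderOf_r hodd l; rw [hy] at hl; exact absurd hl (by decide)
    | sr l =>
      have hk := eq_zero_of_r_mul_sr_comm hodd hxy
      rw [hk, r_zero, orderOf_one] at hx
      have h1 := orderOf_eq_one_iff.1 hx.symm
      rwa [← r_zero, r.injEq] at h1

lemma r_adj_sr {n : ℕ} (hodd : Odd n) (i j : ZMod n) :
    (orderSuper (DihedralGroup n)).Adj (r i) (sr j) ↔ i = 0 := by
  have hi := odd_orderOf_r hodd i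
  simp only [orderSuper, SimpleGraph.fromRel_adj]
  constructor
  · have hne : orderOf (r i) ≠ orderOf (sr j) := by
      intro h; rw [h, orderOf_sr] at hi; exact absurd hi (by decide)
    rintro ⟨-, (h | ⟨x, y, -, hxy, hx, hy⟩) | (h | ⟨y, x, -, hxy, hy, hx⟩)⟩
    · exact absurd h hne
    · exact eq_zero_of_comm hodd hxy hx hy
    · exact absurd h.symm hne
    · exact eq_zero_of_comm hodd hxy.symm hx hy
  · rintro rfl
    exact ⟨nofun, Or.inl (Or.inr ⟨r 0, sr j, nofun, by simp, rfl, rfl⟩)⟩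

/-- The `2n × 3` matrix whose columns are the indicators of the clique of rotations, of the clique
formed by the reflections and the identity, and of the identity. -/
def cliqueCols (n : ℕ) : Matrix (DihedralGroup n) (Fin 3) ℝ :=
  fun x => match x with
    | r i => ![1, if i = 0 then 1 else 0, if i = 0 then 1 else 0]
    | sr _ => ![0, 1, 0]

/-- The transpose of `cliqueCols n` with the row of the identity negated; that row compensates for
the identity lying in both cliques. -/
def cliqueRows (n : ℕ) : Matrix (Fin 3) (DihedralGroup n) ℝ :=
  fun k x => ![1, 1, -1] k * cliqueCols n x k

/-- `A + I` is the sum of the all-ones matrices of the two cliques minus the one of their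
intersection, so it factors through `ℝ³`. -/
lemma adjMat_eq (n : ℕ) [NeZero n] (hodd : Odd n) :
    adjMat (orderSuper (DihedralGroup n)) =
      cliqueCols n * cliqueRows n - Matrix.scalar (DihedralGroup n) (1 : ℝ) := by
  ext x y
  have hs := (orderSuper (DihedralGroup n)).adj_comm
  rcases x with i | i <;> rcases y with j | j
  · by_cases hij : i = j <;> by_cases hi : i = 0 <;> by_cases hj : j = 0 <;>
      simp_all [-r_zero, adjMat, r_adj_r, Matrix.mul_apply, Fin.sum_univ_three, cliqueCols,
        cliqueRows]
  · simp [adjMat, r_adj_sr hodd, Matrix.mul_apply, Fin.sum_univ_three, cliqueCols,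
        cliqueRows]
  · simp [adjMat, hs (sr i) (r j), r_adj_sr hodd, Matrix.mul_apply, Fin.sum_univ_three, cliqueCols,
        cliqueRows]
  · by_cases hij : i = j <;>
    simp [hij, adjMat, sr_adj_sr, Matrix.mul_apply, Fin.sum_univ_three, cliqueCols,
        cliqueRows]

lemma sum_dihedral (n : ℕ) [NeZero n] (f : DihedralGroup n → ℝ) :
    ∑ x, f x = ∑ i : ZMod n, f (r i) + ∑ i : ZMod n, f (sr i) := by
  rw [← equivSum.symm.sum_comp, Fintype.sum_sum_type]
  rfl

lemma cliqueRows_mul_cliqueCols (n : ℕ) [NeZero n] :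
    cliqueRows n * cliqueCols n = !![(n : ℝ), 1, 1; 1, (n : ℝ) + 1, 1; -1, -1, -1] := by
  ext a b
  rw [Matrix.mul_apply, sum_dihedral]
  fin_cases a <;> fin_cases b <;> simp [cliqueRows, cliqueCols, ZMod.card, add_comm]

lemma charpoly_orderSuper (n : ℕ) [NeZero n] (hn : 3 ≤ n) (hodd : Odd n) :
    (adjMat (orderSuper (DihedralGroup n))).charpoly =
        (X + 1) ^ (2 * n - 3) *
          (X ^ 3 - C (2 * (n : ℝ) - 3) * X ^ 2 + C ((n : ℝ) ^ 2 - 5 * n + 3) * X +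
            C (2 * (n : ℝ) ^ 2 - 4 * n + 1)) := by
  rw [adjMat_eq n hodd, Matrix.charpoly_sub_scalar, Matrix.charpoly_mul_comm_of_le _ _
    (by rw [DihedralGroup.card, Fintype.card_fin]; omega), cliqueRows_mul_cliqueCols,
    DihedralGroup.card, Fintype.card_fin, Matrix.charpoly, Matrix.det_fin_three]
  simp
  left
  have h2 : (C 2 : ℝ[X]) = 2 := rfl
  have h3 : (C 3 : ℝ[X]) = 3 := rfl
  have h4 : (C 4 : ℝ[X]) = 4 := rfl
  have h5 : (C 5 : ℝ[X]) = 5 := rfl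
  simp only [h2, h3, h4, h5]
  ring

/-- A monic real cubic is determined by three distinct roots. -/
lemma cubic_eq_of_roots {a b c α β γ : ℝ} (hαβ : α < β) (hβγ : β < γ)
    (hα : α ^ 3 - a * α ^ 2 + b * α + c = 0) (hβ : β ^ 3 - a * β ^ 2 + b * β + c = 0)
    (hγ : γ ^ 3 - a * γ ^ 2 + b * γ + c = 0) :
    X ^ 3 - C a * X ^ 2 + C b * X + C c = (X - C α) * (X - C β) * (X - C γ) := by
  -- divided differences of the three root equations give Vieta's formulas
  have e1 : α ^ 2 + α * β + β ^ 2 - a * (α + β) + b = 0 := by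
    apply mul_left_cancel₀ (sub_ne_zero.2 hαβ.ne); linear_combination hα - hβ
  have e2 : β ^ 2 + β * γ + γ ^ 2 - a * (β + γ) + b = 0 := by
    apply mul_left_cancel₀ (sub_ne_zero.2 hβγ.ne); linear_combination hβ - hγ
  have ea : a = α + β + γ := by
    apply mul_left_cancel₀ (sub_ne_zero.2 (hαβ.trans hβγ).ne); linear_combination e2 - e1
  have eb : b = α * β + β * γ + γ * α := by rw [ea] at e1; linear_combination e1
  have ec : c = -(α * β * γ) := by rw [ea, eb] at hα; linear_combination hα
  rw [ea, eb, ec]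
  simp only [map_add, map_mul, map_neg]
  ring

/-- The cubic factor changes sign on each of the three intervals. -/
lemma cubic_roots (n : ℕ) (hn : 3 ≤ n) :
    ∃ α β γ : ℝ, α < β ∧ β < γ ∧
        (-2 < α ∧ α < -1) ∧ ((n : ℝ) - 2 < β ∧ β < (n : ℝ) - 1) ∧
        ((n : ℝ) < γ ∧ γ < (n : ℝ) + 1) ∧
        X ^ 3 - C (2 * (n : ℝ) - 3) * X ^ 2 + C ((n : ℝ) ^ 2 - 5 * n + 3) * X +
            C (2 * (n : ℝ) ^ 2 - 4 * n + 1) = (X - C α) * (X - C β) * (X - C γ) := by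
  have hn' : (3 : ℝ) ≤ n := by exact_mod_cast hn
  generalize (n : ℝ) = m at hn'
  let f : ℝ → ℝ := fun x => x ^ 3 - (2 * m - 3) * x ^ 2 + (m ^ 2 - 5 * m + 3) * x +
    (2 * m ^ 2 - 4 * m + 1)
  have hf : Continuous f := by fun_prop
  obtain ⟨α, ⟨hα1, hα2⟩, hα⟩ : (0 : ℝ) ∈ f '' Set.Ioo (-2) (-1) :=
    intermediate_value_Ioo (by norm_num) hf.continuousOn
      ⟨by simp only [f]; nlinarith, by simp only [f]; nlinarith⟩
  obtain ⟨β, ⟨hβ1, hβ2⟩, hβ⟩ : (0 : ℝ) ∈ f '' Set.Ioo (m - 2) (m - 1) :=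
    intermediate_value_Ioo' (by linarith) hf.continuousOn
      ⟨by simp only [f]; ring_nf; linarith, by simp only [f]; ring_nf; linarith⟩
  obtain ⟨γ, ⟨hγ1, hγ2⟩, hγ⟩ : (0 : ℝ) ∈ f '' Set.Ioo m (m + 1) :=
    intermediate_value_Ioo (by linarith) hf.continuousOn
      ⟨by simp only [f]; ring_nf; linarith, by simp only [f]; ring_nf; linarith⟩
  have hαβ : α < β := by linarith
  have hβγ : β < γ := by linarith
  exact ⟨α, β, γ, hαβ, hβγ, ⟨hα1, hα2⟩, ⟨hβ1, hβ2⟩, ⟨hγ1, hγ2⟩,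
    cubic_eq_of_roots hαβ hβγ hα hβ hγ⟩

/-- Adjacency spectrum of the order super commuting graph of the dihedral group `D_{2n}`
for odd `n ≥ 3`: the characteristic polynomial is
`(x+1)^{2n−3} (x³ − (2n−3)x² + (n²−5n+3)x + (2n²−4n+1))`; moreover `−1` is an eigenvalue
of multiplicity `2n−3` and the three remaining simple eigenvalues `α < β < γ` satisfy
`−2 < α < −1`, `n−2 < β < n−1` and `n < γ < n+1`. -/
theorem stmt_8 (n : ℕ) [NeZero n] (hn : 3 ≤ n) (hodd : Odd n) :
    (adjMat (orderSuper (DihedralGroup n))).charpoly =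
        (X + 1) ^ (2 * n - 3) *
          (X ^ 3 - C (2 * (n : ℝ) - 3) * X ^ 2 + C ((n : ℝ) ^ 2 - 5 * n + 3) * X +
            C (2 * (n : ℝ) ^ 2 - 4 * n + 1)) ∧
      ∃ α β γ : ℝ, α < β ∧ β < γ ∧
        (-2 < α ∧ α < -1) ∧ ((n : ℝ) - 2 < β ∧ β < (n : ℝ) - 1) ∧
        ((n : ℝ) < γ ∧ γ < (n : ℝ) + 1) ∧
        (adjMat (orderSuper (DihedralGroup n))).charpoly =
          (X + 1) ^ (2 * n - 3) * ((X - C α) * (X - C β) * (X - C γ)) := by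
  have h := charpoly_orderSuper n hn hodd
  refine ⟨h, ?_⟩
  obtain ⟨α, β, γ, hαβ, hβγ, hα, hβ, hγ, hfac⟩ := cubic_roots n hn
  exact ⟨α, β, γ, hαβ, hβγ, hα, hβ, hγ, by rw [h, hfac]⟩
end
end

section
/- Let n ≥ 3 be odd and let Q_{4n} be the generalized quaternion (dicyclic) group of order 4n. Then the Laplacian eigenvalues of the order super commuting graph Δ^o(Q_{4n}) are exactly: 0 with multiplicity 1, 2 with multiplicity 1, 2n with multiplicity 2n − 3, 2n + 2 with multiplicity 2n − 1, and 4n with multiplicity 2; equivalently, χ(L(Δ^o(Q_{4n})), x) = x(x − 2)(x − 2n)^{2n−3}(x − 2n − 2)^{2n−1}(x − 4n)². -/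
/-!
Since `n` is odd, the elements of order `4` in `Q_{4n}` are exactly the `2n` elements outside the
cyclic subgroup `⟨a⟩`, and such an element commutes with an element of `⟨a⟩` only if the latter is
one of the two central elements `1, aⁿ`. Hence `Δ^o(Q_{4n})` is the join of `K₂` with the disjoint
union of `K_{2n-2}` and `K_{2n}` (`quatMat_colour_eq_adj`).

Such a graph is determined by a colouring `c` of its vertices by three colours and a `0/1` matrix
`B` on the colours with unit diagonal. Its Laplacian is the diagonal matrix with entries
`d (c v)`, where `d k = ∑ l, N l * B k l` and `N l` is the number of vertices of colour `l`, minus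
the matrix `B (c u) (c v)` of rank at most three (`lapMat_eq_of_colouring`). By the
Weinstein–Aronszajn identity `det (1 + M N) = det (1 + N M)`, its characteristic polynomial at any
`x` different from all `d k` is `∏ k, (x - d k) ^ N k` times a `3 × 3` determinant
(`det_diagonal_add_submatrix`). Agreement at all but three real numbers gives equality of the
polynomials.
-/

open Polynomial

noncomputable section
open scoped Classical

/-! ### Laplacians of graphs given by a colouring -/

section Colouring

variable {V : Type*} [Fintype V]

/-- The number of vertices of colour `k`. -/
def colourCard (c : V → Fin 3) (k : Fin 3) : ℕ := (Finset.univ.filter fun v => c v = k).card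

lemma sum_comp_colour (c : V → Fin 3) (f : Fin 3 → ℝ) :
    ∑ v, f (c v) = ∑ k, (colourCard c k : ℝ) * f k := by
  rw [← Finset.sum_fiberwise (s := Finset.univ) (g := c)]
  refine Finset.sum_congr rfl fun k _ => ?_
  rw [Finset.sum_congr rfl (g := fun _ => f k), Finset.sum_const, nsmul_eq_mul, colourCard]
  intro v hv
  rw [(Finset.mem_filter.mp hv).2]

lemma prod_comp_colour (c : V → Fin 3) (f : Fin 3 → ℝ) :
    ∏ v, f (c v) = ∏ k, f k ^ colourCard c k := by
  rw [← Finset.prod_fiberwise (s := Finset.univ) (g := c)]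
  refine Finset.prod_congr rfl fun k _ => ?_
  rw [Finset.prod_congr rfl (g := fun _ => f k), Finset.prod_const, colourCard]
  intro v hv
  rw [(Finset.mem_filter.mp hv).2]

/-- If `B` gives the adjacency of distinct vertices in terms of their colours, then the adjacency
matrix is `B.submatrix c c - 1`, and the `-1` cancels against that in the degrees. -/
lemma lapMat_eq_of_colouring [DecidableEq V] (Γ : SimpleGraph V) (c : V → Fin 3) (B : Matrix (Fin 3) (Fin 3) ℝ)
    (hdiag : ∀ k, B k k = 1)
    (h : ∀ u v, u ≠ v → B (c u) (c v) = if Γ.Adj u v then 1 else 0) :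
    lapMat Γ = Matrix.diagonal (fun v => ∑ k, (colourCard c k : ℝ) * B (c v) k)
      - B.submatrix c c := by
  have hA : ∀ u v, (if Γ.Adj u v then (1 : ℝ) else 0) =
      B (c u) (c v) - if u = v then 1 else 0 := by
    intro u v
    by_cases huv : u = v
    · subst huv; simp [hdiag]
    · rw [h u v huv]; simp [huv]
  have hdeg : ∀ v, ((Finset.univ.filter fun u => Γ.Adj v u).card : ℝ) =
      ∑ k, (colourCard c k : ℝ) * B (c v) k - 1 := by
    intro v
    rw [← sum_comp_colour c (fun k => B (c v) k), Finset.card_filter]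
    push_cast
    rw [Finset.sum_congr rfl (fun u _ => hA v u), Finset.sum_sub_distrib]
    simp
  ext u v
  simp only [lapMat, adjMat, Matrix.sub_apply, Matrix.submatrix_apply, hA u v]
  by_cases huv : u = v
  · subst huv; simp [hdeg]
  · simp [huv]

/-- A diagonal matrix depending only on colours plus a matrix pulled back from the colours:
the latter factors through the indicator matrix of the colouring, so the determinant reduces
to one indexed by the colours. -/
lemma det_diagonal_add_submatrix [DecidableEq V] (c : V → Fin 3) (B : Matrix (Fin 3) (Fin 3) ℝ) (e : Fin 3 → ℝ)
    (he : ∀ k, e k ≠ 0) :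
    (Matrix.diagonal (fun v => e (c v)) + B.submatrix c c).det =
      (∏ k, e k ^ colourCard c k) *
        (1 + B * Matrix.diagonal (fun k => (colourCard c k : ℝ) * (e k)⁻¹)).det := by
  let U : Matrix V (Fin 3) ℝ := fun v k => if c v = k then 1 else 0
  have h1 : Matrix.diagonal (fun v => e (c v)) + B.submatrix c c =
      Matrix.diagonal (fun v => e (c v)) *
        (1 + (Matrix.diagonal (fun v => (e (c v))⁻¹) * U) * (B * U.transpose)) := by
    rw [mul_add, mul_one, ← Matrix.mul_assoc, ← Matrix.mul_assoc,
      ← Matrix.mul_assoc, Matrix.diagonal_mul_diagonal]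
    simp only [mul_inv_cancel₀ (he _), Matrix.diagonal_one, Matrix.one_mul]
    congr 1
    ext u v
    have hUB : ∀ k, (U * B) u k = B (c u) k := fun k => by
      rw [Matrix.mul_apply]; simp [U]
    rw [Matrix.mul_apply]
    simp only [hUB, Matrix.transpose_apply]
    simp [U]
  have h2 : U.transpose * (Matrix.diagonal (fun v => (e (c v))⁻¹) * U) =
      Matrix.diagonal (fun k => (colourCard c k : ℝ) * (e k)⁻¹) := by
    ext k l
    have : ∀ v, U v k * ((e (c v))⁻¹ * U v l) =
        (fun m => (if m = k then 1 else 0) * ((e m)⁻¹ * (if m = l then 1 else 0))) (c v) :=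
      fun v => rfl
    simp only [Matrix.mul_apply (M := U.transpose), Matrix.diagonal_mul, Matrix.transpose_apply]
    rw [Finset.sum_congr rfl (fun v _ => this v), sum_comp_colour c
      (fun m => (if m = k then 1 else 0) * ((e m)⁻¹ * (if m = l then 1 else 0)))]
    by_cases hkl : k = l
    · subst hkl; simp
    · simp [hkl, Ne.symm hkl]
  rw [h1, Matrix.det_mul, Matrix.det_diagonal, Matrix.det_one_add_mul_comm, Matrix.mul_assoc, h2,
    prod_comp_colour c e]

end Colouring

/-! ### The order super commuting graph of the quaternion group -/

open QuaternionGroup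

lemma ZMod.eq_zero_or_eq_of_add_self {n : ℕ} [NeZero n] {i : ZMod (2 * n)} (h : i + i = 0) :
    i = 0 ∨ i = (n : ZMod (2 * n)) := by
  have hlt := ZMod.val_lt i
  have hi := ZMod.natCast_zmod_val i
  rw [← hi, ← Nat.cast_add, ZMod.natCast_eq_zero_iff, ← two_mul] at h
  obtain ⟨k, hk⟩ := Nat.dvd_of_mul_dvd_mul_left (by norm_num) h
  have hk2 : k < 2 := by
    by_contra hcon
    have : n * 2 ≤ n * k := Nat.mul_le_mul_left _ (by omega)
    omega
  interval_cases k
  · left; rw [← hi, hk]; simp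
  · right; rw [← hi, hk]; simp

lemma natCast_add_self (n : ℕ) : (n : ZMod (2 * n)) + n = 0 := by
  rw [← Nat.cast_add, ← two_mul, ZMod.natCast_self]

/-- Colour `0` for the central elements `1, aⁿ`, colour `1` for the other elements of `⟨a⟩`,
and colour `2` for the elements outside `⟨a⟩`. -/
def quatColour (n : ℕ) : QuaternionGroup n → Fin 3
  | a i => if i = 0 ∨ i = (n : ZMod (2 * n)) then 0 else 1
  | xa _ => 2

/-- All colours are adjacent to one another and to themselves, except for the pair `1, 2`. -/
def quatMat : Matrix (Fin 3) (Fin 3) ℝ := !![1, 1, 1; 1, 1, 0; 1, 0, 1]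

lemma det_one_add_quatMat_mul (f : Fin 3 → ℝ) :
    (1 + quatMat * Matrix.diagonal f).det =
      (1 + f 0) * (1 + f 1) * (1 + f 2) - f 0 * f 1 * (1 + f 2) - f 0 * f 2 * (1 + f 1) := by
  rw [Matrix.det_fin_three]
  simp only [Matrix.add_apply, Matrix.mul_diagonal]
  simp [quatMat]
  ring

lemma orderOf_a_ne_four {n : ℕ} [NeZero n] (hodd : Odd n) (i : ZMod (2 * n)) :
    orderOf (a i : QuaternionGroup n) ≠ 4 := by
  intro h
  have h1 : orderOf (a i : QuaternionGroup n) ∣ 2 * n := by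
    rw [orderOf_a]; exact Nat.div_dvd_of_dvd (Nat.gcd_dvd_left _ _)
  rw [h] at h1
  obtain ⟨m, rfl⟩ := hodd
  omega

/-- Some elements of the orders of `a i` and `xa j` commute exactly when `a i` is central: an
element of order `4` lies outside `⟨a⟩`, so it commutes only with those `a l` for which
`(a l)² = 1`, a condition that depends on the order alone. -/
lemma orderSuper_rel_a_xa {n : ℕ} [NeZero n] (hodd : Odd n) (i j : ZMod (2 * n)) :
    (∃ x y : QuaternionGroup n, x ≠ y ∧ x * y = y * x ∧
      orderOf x = orderOf (a i : QuaternionGroup n) ∧ orderOf y = orderOf (xa j : QuaternionGroup n)) ↔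
      (i = 0 ∨ i = (n : ZMod (2 * n))) := by
  constructor
  · rintro ⟨x, y, -, hc, hx, hy⟩
    rw [orderOf_xa] at hy
    rcases y with k | k
    · exact absurd hy (orderOf_a_ne_four hodd k)
    rcases x with l | l
    · have hl : l + l = 0 := by
        simp only [a_mul_xa, xa_mul_a, xa.injEq] at hc
        linear_combination -hc
      have h2 : (a l : QuaternionGroup n) ^ 2 = 1 := by
        rw [sq, a_mul_a, hl, a_zero]
      rw [← orderOf_dvd_iff_pow_eq_one, hx, orderOf_dvd_iff_pow_eq_one, sq, a_mul_a, one_def] at h2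
      exact ZMod.eq_zero_or_eq_of_add_self (a.inj h2)
    · rw [orderOf_xa] at hx
      exact absurd hx.symm (orderOf_a_ne_four hodd i)
  · intro h
    refine ⟨a i, xa j, by simp, ?_, rfl, rfl⟩
    have hi : i + i = 0 := by
      rcases h with rfl | rfl
      · simp
      · exact natCast_add_self n
    simp only [a_mul_xa, xa_mul_a, xa.injEq]
    linear_combination -hi

lemma quatMat_colour_eq_adj {n : ℕ} [NeZero n] (hodd : Odd n) (u v : QuaternionGroup n)
    (huv : u ≠ v) :
    quatMat (quatColour n u) (quatColour n v) =
      if (orderSuper (QuaternionGroup n)).Adj u v then 1 else 0 := by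
  -- the defining relation is already symmetric
  have hadj : (orderSuper (QuaternionGroup n)).Adj u v ↔ (orderOf u = orderOf v ∨
      ∃ x' y' : QuaternionGroup n, x' ≠ y' ∧ x' * y' = y' * x' ∧ orderOf x' = orderOf u ∧
        orderOf y' = orderOf v) := by
    rw [orderSuper, SimpleGraph.fromRel_adj]
    constructor
    · rintro ⟨-, h | h | ⟨x, y, h1, h2, h3, h4⟩⟩
      · exact h
      · exact Or.inl h.symm
      · exact Or.inr ⟨y, x, h1.symm, h2.symm, h4, h3⟩
    · exact fun h => ⟨huv, Or.inl h⟩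
  rcases u with i | i <;> rcases v with j | j
  · have : (orderSuper (QuaternionGroup n)).Adj (a i) (a j) :=
      hadj.2 (Or.inr ⟨a i, a j, huv, by simp [add_comm], rfl, rfl⟩)
    rw [if_pos this]
    simp only [quatColour]
    split_ifs <;> simp [quatMat]
  · have h4 : orderOf (a i : QuaternionGroup n) ≠ orderOf (xa j : QuaternionGroup n) := by
      rw [orderOf_xa]; exact orderOf_a_ne_four hodd i
    rw [orderSuper_rel_a_xa hodd, or_iff_right h4] at hadj
    simp only [hadj, quatColour]
    split_ifs <;> simp [quatMat]
  · have h4 : orderOf (a j : QuaternionGroup n) ≠ orderOf (xa i : QuaternionGroup n) := by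
      rw [orderOf_xa]; exact orderOf_a_ne_four hodd j
    have hadj' : (orderSuper (QuaternionGroup n)).Adj (xa i) (a j) ↔
        (j = 0 ∨ j = (n : ZMod (2 * n))) := by
      rw [hadj, or_iff_right h4.symm, ← orderSuper_rel_a_xa hodd j i]
      constructor <;> rintro ⟨x, y, h1, h2, h3, h4⟩ <;> exact ⟨y, x, h1.symm, h2.symm, h4, h3⟩
    simp only [hadj', quatColour]
    split_ifs <;> simp [quatMat]
  · have : (orderSuper (QuaternionGroup n)).Adj (xa i) (xa j) :=
      hadj.2 (Or.inl (by simp))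
    rw [if_pos this]
    simp [quatColour, quatMat]

/-! ### Sizes of the colour classes -/

lemma colourCard_zero (n : ℕ) [NeZero n] : colourCard (quatColour n) 0 = 2 := by
  have hne : (n : ZMod (2 * n)) ≠ 0 := by
    rw [Ne, ZMod.natCast_eq_zero_iff]
    intro h
    have := Nat.le_of_dvd (NeZero.pos n) h
    have := NeZero.pos n
    omega
  have : (Finset.univ.filter fun v => quatColour n v = 0) = {a 0, a (n : ZMod (2 * n))} := by
    ext v
    rcases v with i | i
    · simp only [Finset.mem_filter, Finset.mem_univ, true_and, Finset.mem_insert,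
        Finset.mem_singleton, a.injEq]
      simp only [quatColour]
      split_ifs with h <;> simp [h]
    · rw [Finset.mem_filter]
      simp [quatColour, -a_zero]
  rw [colourCard, this, Finset.card_pair]
  simpa [-a_zero] using hne.symm

lemma colourCard_two (n : ℕ) [NeZero n] : colourCard (quatColour n) 2 = 2 * n := by
  have hinj : Function.Injective (xa : ZMod (2 * n) → QuaternionGroup n) := fun i j h => xa.inj h
  have : (Finset.univ.filter fun v => quatColour n v = 2) =
      Finset.univ.image (xa : ZMod (2 * n) → QuaternionGroup n) := by
    ext v
    rcases v with i | i
    · simp only [Finset.mem_filter, Finset.mem_univ, true_and, Finset.mem_image,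
        reduceCtorEq, exists_false, iff_false]
      simp only [quatColour]
      split_ifs <;> decide
    · rw [Finset.mem_filter]
      simp [quatColour]
  rw [colourCard, this, Finset.card_image_of_injective _ hinj, Finset.card_univ, ZMod.card]

lemma colourCard_one (n : ℕ) [NeZero n] : colourCard (quatColour n) 1 = 2 * n - 2 := by
  have h := Finset.card_eq_sum_card_fiberwise (s := Finset.univ) (t := Finset.univ)
    (f := quatColour n) (fun _ _ => Finset.mem_coe.2 (Finset.mem_univ _))
  rw [Finset.card_univ, QuaternionGroup.card, Fin.sum_univ_three] at h
  have h0 := colourCard_zero n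
  have h2 := colourCard_two n
  unfold colourCard at *
  omega

/-- Laplacian spectrum of the order super commuting graph of the generalized quaternion
group `Q_{4n}` for odd `n ≥ 3`: the Laplacian eigenvalues are exactly
`0, 2, 2n, 2n+2, 4n` with multiplicities `1, 1, 2n−3, 2n−1, 2`, i.e.
`χ(L(Δ^o(Q_{4n})), x) = x (x−2) (x−2n)^{2n−3} (x−2n−2)^{2n−1} (x−4n)²`. -/
theorem stmt_12 (n : ℕ) [NeZero n] (hn : 3 ≤ n) (hodd : Odd n) :
    (lapMat (orderSuper (QuaternionGroup n))).charpoly =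
      X * (X - 2) * (X - C (2 * (n : ℝ))) ^ (2 * n - 3) *
        (X - C (2 * (n : ℝ) + 2)) ^ (2 * n - 1) * (X - C (4 * (n : ℝ))) ^ 2 := by
  have hL := lapMat_eq_of_colouring (orderSuper (QuaternionGroup n)) (quatColour n) quatMat
    (by intro k; fin_cases k <;> simp [quatMat]) (quatMat_colour_eq_adj hodd)
  obtain ⟨m, rfl⟩ : ∃ m, n = m + 2 := ⟨n - 2, by omega⟩
  have hN0 := colourCard_zero (m + 2)
  have hN1 : colourCard (quatColour (m + 2)) 1 = 2 * m + 2 := by rw [colourCard_one]; omega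
  have hN2 := colourCard_two (m + 2)
  set d : Fin 3 → ℝ :=
    fun k => ∑ l, (colourCard (quatColour (m + 2)) l : ℝ) * quatMat k l with hd
  have hd0 : d 0 = 4 * m + 8 := by
    simp [hd, Fin.sum_univ_three, hN0, hN1, hN2, quatMat]; ring
  have hd1 : d 1 = 2 * m + 4 := by
    simp [hd, Fin.sum_univ_three, hN0, hN1, hN2, quatMat]; ring
  have hd2 : d 2 = 2 * m + 6 := by
    simp [hd, Fin.sum_univ_three, hN0, hN1, hN2, quatMat]; ring
  apply Polynomial.eq_of_infinite_eval_eq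
  refine Set.Infinite.mono ?_ (Set.Finite.infinite_compl (Set.finite_range d))
  intro x hx
  have he : ∀ k, x - d k ≠ 0 := fun k h => hx ⟨k, by linarith⟩
  have hmat : Matrix.scalar (QuaternionGroup (m + 2)) x - lapMat (orderSuper _) =
      Matrix.diagonal (fun v => (fun k => x - d k) (quatColour (m + 2) v)) +
        quatMat.submatrix (quatColour (m + 2)) (quatColour (m + 2)) := by
    rw [hL, ← sub_add, Matrix.scalar_apply, Matrix.diagonal_sub]
  have e0 := he 0
  have e1 := he 1
  have e2 := he 2
  rw [Set.mem_ofPred_eq, Matrix.eval_charpoly, hmat, det_diagonal_add_submatrix _ _ _ he,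
    Fin.prod_univ_three, det_one_add_quatMat_mul, hN0, hN1, hN2, hd0, hd1, hd2,
    show 2 * (m + 2) - 3 = 2 * m + 1 by omega, show 2 * (m + 2) - 1 = 2 * m + 3 by omega]
  rw [hd0] at e0
  rw [hd1] at e1
  rw [hd2] at e2
  simp only [eval_mul, eval_sub, eval_pow, eval_X, eval_C, eval_ofNat]
  push_cast
  rw [show (4 : ℝ) * (m + 2) = 4 * m + 8 by ring, show (2 : ℝ) * (m + 2) + 2 = 2 * m + 6 by ring,
    show (2 : ℝ) * (m + 2) = 2 * m + 4 by ring]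
  -- what remains is a rational identity in `x` and `m`, up to powers of the three denominators
  rw [show 2 * (m + 2) = (2 * m + 3) + 1 by ring, show 2 * m + 2 = (2 * m + 1) + 1 by ring,
    pow_succ _ (2 * m + 3), pow_succ _ (2 * m + 1)]
  generalize (x - (2 * (m : ℝ) + 4)) ^ (2 * m + 1) = P
  generalize (x - (2 * (m : ℝ) + 6)) ^ (2 * m + 3) = Q
  -- the denominators are kept as atoms while they are cleared
  obtain ⟨A, hA⟩ : ∃ A, A = x - (4 * (m : ℝ) + 8) := ⟨_, rfl⟩
  obtain ⟨B, hB⟩ : ∃ B, B = x - (2 * (m : ℝ) + 4) := ⟨_, rfl⟩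
  obtain ⟨D, hD⟩ : ∃ D, D = x - (2 * (m : ℝ) + 6) := ⟨_, rfl⟩
  rw [← hA] at e0 ⊢
  rw [← hB] at e1 ⊢
  rw [← hD] at e2 ⊢
  field_simp
  rw [hA, hB, hD]
  ring
end
end

section
/- Let p and q be distinct primes with q dividing p − 1, and let G be a nonabelian group of order pq. Then the Laplacian eigenvalues of the order super commuting graph Δ^o(G) are exactly: 0 with multiplicity 1, 1 with multiplicity 1, p with multiplicity p − 2, pq − p + 1 with multiplicity pq − p − 1, and pq with multiplicity 1; equivalently, χ(L(Δ^o(G)), x) = x(x − 1)(x − p)^{p−2}(x − (pq − p + 1))^{pq−p−1}(x − pq). -/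
/-!
In a nonabelian group `G` of order `pq` every element has order `1`, `p` or `q`, and no element of
order `p` commutes with one of order `q`. Hence `Δ^o(G)` is the join of the identity with two
disjoint complete graphs (`orderSuper_adj_iff`), formed by the `p - 1` elements of order `p` (the
Sylow `p`-subgroup is unique, `card_orderOf_eq_prime`) and the `pq - p` elements of order `q`.

The Laplacian of such a graph is `D - U Uᵀ`, where `D` is diagonal and the two columns of `U` are
the indicators of the two maximal cliques (`lapMat_two_cliques`). The matrix determinant lemma
`det (A + U Uᵀ) = det A * det (1 + Uᵀ A⁻¹ U)` then gives the characteristic polynomial at all but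
finitely many real numbers (`charpoly_two_cliques`), which determines it.
-/

open Polynomial

noncomputable section
open scoped Classical

/-- Sum of a function that is constant on each of the classes `{e}`, `S` and the remaining
`t + 1` elements. -/
theorem sum_three {V : Type*} [Fintype V] (e : V) (S : Finset V) (he : e ∉ S) (s t : ℕ)
    (hS : S.card = s + 1) (hV : Fintype.card V = s + t + 3) (a b c : ℝ) :
    ∑ v : V, (if v = e then a else if v ∈ S then b else c) = a + (s + 1) * b + (t + 1) * c := by
  have hT : (insert e S)ᶜ.card = t + 1 := by
    rw [Finset.card_compl, Finset.card_insert_of_notMem he]; omega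
  rw [← Finset.sum_add_sum_compl (insert e S), Finset.sum_insert he]
  have h1 : ∑ v ∈ S, (if v = e then a else if v ∈ S then b else c) = ∑ v ∈ S, b :=
    Finset.sum_congr rfl fun v hv => by
      rw [if_neg (by rintro rfl; exact he hv), if_pos hv]
  have h2 : ∑ v ∈ (insert e S)ᶜ, (if v = e then a else if v ∈ S then b else c)
      = ∑ v ∈ (insert e S)ᶜ, c :=
    Finset.sum_congr rfl fun v hv => by
      simp only [Finset.mem_compl, Finset.mem_insert, not_or] at hv
      rw [if_neg hv.1, if_neg hv.2]
  rw [h1, h2, if_pos rfl, Finset.sum_const, Finset.sum_const, hS, hT]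
  simp

theorem prod_three {V : Type*} [Fintype V] (e : V) (S : Finset V) (he : e ∉ S) (s t : ℕ)
    (hS : S.card = s + 1) (hV : Fintype.card V = s + t + 3) (a b c : ℝ) :
    ∏ v : V, (if v = e then a else if v ∈ S then b else c) = a * b ^ (s + 1) * c ^ (t + 1) := by
  have hT : (insert e S)ᶜ.card = t + 1 := by
    rw [Finset.card_compl, Finset.card_insert_of_notMem he]; omega
  rw [← Finset.prod_mul_prod_compl (insert e S), Finset.prod_insert he]
  have h1 : ∏ v ∈ S, (if v = e then a else if v ∈ S then b else c) = ∏ v ∈ S, b :=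
    Finset.prod_congr rfl fun v hv => by
      rw [if_neg (by rintro rfl; exact he hv), if_pos hv]
  have h2 : ∏ v ∈ (insert e S)ᶜ, (if v = e then a else if v ∈ S then b else c)
      = ∏ v ∈ (insert e S)ᶜ, c :=
    Finset.prod_congr rfl fun v hv => by
      simp only [Finset.mem_compl, Finset.mem_insert, not_or] at hv
      rw [if_neg hv.1, if_neg hv.2]
  rw [h1, h2, if_pos rfl, Finset.prod_const, Finset.prod_const, hS, hT]

/-- The `V × 2` matrix whose columns are the indicators of the two maximal cliques `S ∪ {e}`
and `Sᶜ` (with `e ∉ S`) of the join of `{e}` with two disjoint complete graphs. -/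
def cliqueInc {V : Type*} (e : V) (S : Finset V) : Matrix V (Fin 2) ℝ :=
  fun v i => if v = e then 1 else if v ∈ S then ![1, 0] i else ![0, 1] i

/-- For two cliques `S ∪ {e}` and `Sᶜ` meeting only in `e`, the Laplacian is diagonal minus a
matrix of rank two. The Gram matrix `U Uᵀ` of the clique indicators has a diagonal entry `1`
at each vertex other than `e` and `2` at `e`, which explains the diagonal (degree plus `1`,
resp. plus `2`). -/
theorem lapMat_two_cliques {V : Type*} [Fintype V] (Γ : SimpleGraph V) (e : V) (S : Finset V)
    (he : e ∉ S) (s t : ℕ) (hS : S.card = s + 1) (hV : Fintype.card V = s + t + 3)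
    (hΓ : ∀ u v, Γ.Adj u v ↔ u ≠ v ∧ (u = e ∨ v = e ∨ (u ∈ S ↔ v ∈ S))) :
    lapMat Γ = Matrix.diagonal (fun v => if v = e then (s + t + 4 : ℝ) else
      if v ∈ S then (s + 2 : ℝ) else (t + 2 : ℝ)) - cliqueInc e S * (cliqueInc e S).transpose := by
  have hdeg : ∀ v, ((Finset.univ.filter fun u => Γ.Adj v u).card : ℝ) =
      if v = e then (s + t + 2 : ℝ) else if v ∈ S then (s + 1 : ℝ) else (t + 1 : ℝ) := by
    intro v
    split_ifs with h1 h2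
    · have : (Finset.univ.filter fun u => Γ.Adj v u) = Finset.univ.erase e := by
        ext u; simp [hΓ, h1, eq_comm]
      rw [this, Finset.card_erase_of_mem (Finset.mem_univ _), Finset.card_univ, hV]
      push_cast [Nat.add_sub_cancel]; ring
    · have : (Finset.univ.filter fun u => Γ.Adj v u) = (insert e S).erase v := by
        ext u; simp [hΓ, h1, h2, eq_comm]
      rw [this, Finset.card_erase_of_mem (by simp [h2]), Finset.card_insert_of_notMem he, hS]
      simp
    · have : (Finset.univ.filter fun u => Γ.Adj v u) = Sᶜ.erase v := by
        ext u
        simp only [hΓ, h1, h2, Finset.mem_filter, Finset.mem_univ, Finset.mem_erase,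
          Finset.mem_compl, true_and, false_or, false_iff, ne_comm (a := v)]
        refine and_congr_right fun _ => ⟨?_, Or.inr⟩
        rintro (rfl | h)
        exacts [he, h]
      rw [this, Finset.card_erase_of_mem (by simp [h2]), Finset.card_compl, hS, hV]
      have : s + t + 3 - (s + 1) - 1 = t + 1 := by omega
      rw [this]; simp
  ext u v
  simp only [lapMat, adjMat, Matrix.sub_apply, Matrix.diagonal_apply, hdeg]
  simp only [hΓ, Matrix.mul_apply, Fin.sum_univ_two, Matrix.transpose_apply, cliqueInc]
  by_cases huv : u = v
  · subst huv
    by_cases h1 : u = e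
    · simp [h1]; ring
    · by_cases h2 : u ∈ S <;> simp [h1, h2] <;> ring
  · by_cases h1 : u = e
    · subst h1
      by_cases h2 : v ∈ S <;> simp [huv, Ne.symm huv, h2]
    · by_cases h2 : v = e
      · by_cases h3 : u ∈ S <;> simp [h1, h2, h3]
      · by_cases h3 : u ∈ S <;> by_cases h4 : v ∈ S <;> simp [huv, h1, h2, h3, h4]

/-- Laplacian characteristic polynomial of the join of a vertex `e` with the disjoint union of
complete graphs on `s + 1` and `t + 1` vertices. The two polynomials are compared at all `x`
which are not diagonal entries of the matrix of `lapMat_two_cliques`, where the matrix determinant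
lemma reduces the determinant to a `2 × 2` one. -/
theorem charpoly_two_cliques {V : Type*} [Fintype V] (Γ : SimpleGraph V) (e : V) (S : Finset V)
    (he : e ∉ S) (s t : ℕ) (hS : S.card = s + 1) (hV : Fintype.card V = s + t + 3)
    (hΓ : ∀ u v, Γ.Adj u v ↔ u ≠ v ∧ (u = e ∨ v = e ∨ (u ∈ S ↔ v ∈ S))) :
    (lapMat Γ).charpoly = X * (X - 1) * (X - C (s + 2 : ℝ)) ^ s * (X - C (t + 2 : ℝ)) ^ t *
      (X - C (s + t + 3 : ℝ)) := by
  apply Polynomial.eq_of_infinite_eval_eq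
  refine Set.Infinite.mono (s := ({(s + t + 4 : ℝ), (s + 2 : ℝ), (t + 2 : ℝ)} : Set ℝ)ᶜ) ?_
    (Set.Finite.infinite_compl (by simp))
  intro x hx
  simp only [Set.mem_compl_iff, Set.mem_insert_iff, Set.mem_singleton_iff, not_or] at hx
  obtain ⟨ha, hb, hc⟩ := hx
  replace ha := sub_ne_zero.2 ha
  replace hb := sub_ne_zero.2 hb
  replace hc := sub_ne_zero.2 hc
  set d : V → ℝ := fun v => if v = e then x - (s + t + 4 : ℝ) else
      if v ∈ S then x - (s + 2 : ℝ) else x - (t + 2 : ℝ) with hd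
  have hd0 : ∀ v, d v ≠ 0 := by
    intro v; simp only [hd]; split_ifs <;> assumption
  have hM : Matrix.scalar V x - lapMat Γ =
      Matrix.diagonal d + cliqueInc e S * (cliqueInc e S).transpose := by
    rw [lapMat_two_cliques Γ e S he s t hS hV hΓ, ← sub_add, Matrix.scalar_apply,
      Matrix.diagonal_sub]
    congr 2
    ext v
    simp only [hd]; split_ifs <;> rfl
  have hinv : (Matrix.diagonal d)⁻¹ = Matrix.diagonal (fun v => (d v)⁻¹) := by
    apply Matrix.inv_eq_left_inv
    rw [Matrix.diagonal_mul_diagonal, ← Matrix.diagonal_one]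
    congr 1; ext v; exact inv_mul_cancel₀ (hd0 v)
  have hdet : IsUnit (Matrix.diagonal d).det := by
    rw [Matrix.det_diagonal, isUnit_iff_ne_zero]
    exact Finset.prod_ne_zero_iff.2 fun v _ => hd0 v
  have hent : ∀ i j, ((cliqueInc e S).transpose * Matrix.diagonal (fun v => (d v)⁻¹) *
      cliqueInc e S) i j = (x - (s + t + 4 : ℝ))⁻¹ +
        (s + 1) * (![1, 0] i * ![1, 0] j * (x - (s + 2 : ℝ))⁻¹) +
        (t + 1) * (![0, 1] i * ![0, 1] j * (x - (t + 2 : ℝ))⁻¹) := by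
    intro i j
    rw [← sum_three e S he s t hS hV, Matrix.mul_apply]
    refine Finset.sum_congr rfl fun v _ => ?_
    simp only [Matrix.mul_diagonal, Matrix.transpose_apply, cliqueInc, hd]
    split_ifs <;> ring
  show eval x _ = eval x _
  rw [Matrix.eval_charpoly, hM, Matrix.det_add_mul _ _ hdet, hinv, Matrix.det_fin_two,
    Matrix.det_diagonal, prod_three e S he s t hS hV]
  simp only [Matrix.add_apply, hent]
  simp
  field_simp
  ring

/-- Since `q < p`, the Sylow `p`-subgroup is unique, so its `p - 1` nontrivial elements are all
the elements of order `p`. -/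
theorem card_orderOf_eq_prime {p q : ℕ} (hp : p.Prime) (hq : q.Prime) (hlt : q < p)
    (G : Type*) [Group G] [Fintype G] (hcard : Fintype.card G = p * q) :
    (Finset.univ.filter fun x : G => orderOf x = p).card = p - 1 := by
  have := Fact.mk hp
  have hN : Nat.card G = p * q := by rw [Nat.card_eq_fintype_card, hcard]
  have hpq' : ¬ p ∣ q := fun h => absurd (Nat.le_of_dvd hq.pos h) (by omega)
  let P : Sylow p G := default
  have hPc : Nat.card P = p := by
    rw [P.card_eq_multiplicity, hN, Nat.factorization_mul hp.ne_zero hq.ne_zero]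
    simp [hp.factorization, Nat.factorization_eq_zero_of_not_dvd hpq']
  have hidx : (P : Subgroup G).index = q := by
    have := (P : Subgroup G).card_mul_index
    rw [hN] at this
    have h2 : Nat.card (P : Subgroup G) = p := hPc
    rw [h2] at this
    exact Nat.eq_of_mul_eq_mul_left hp.pos this
  have hone : Nat.card (Sylow p G) = 1 := by
    have h1 := P.card_dvd_index
    rw [hidx] at h1
    have h2 := card_sylow_modEq_one p G
    rcases (Nat.dvd_prime hq).1 h1 with h | h
    · exact h
    · rw [h] at h2
      have := Nat.ModEq.eq_of_lt_of_lt h2 hlt hp.one_lt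
      exact absurd this hq.ne_one
  have hsub : Subsingleton (Sylow p G) := (Nat.card_eq_one_iff_unique.1 hone).1
  have hset : (Finset.univ.filter fun x : G => orderOf x = p) =
      (Finset.univ.filter fun x : G => x ∈ P).erase 1 := by
    ext x
    simp only [Finset.mem_filter, Finset.mem_univ, true_and, Finset.mem_erase]
    constructor
    · intro hx
      refine ⟨by rintro rfl; rw [orderOf_one] at hx; exact hp.ne_one hx.symm, ?_⟩
      have : IsPGroup p (Subgroup.zpowers x) :=
        IsPGroup.of_card (n := 1) (by rw [Nat.card_zpowers, hx, pow_one])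
      obtain ⟨Q, hQ⟩ := this.exists_le_sylow
      rw [Subsingleton.elim P Q]
      exact hQ (Subgroup.mem_zpowers x)
    · rintro ⟨h1, hx⟩
      have : orderOf x ∣ p := by
        rw [← hPc]; exact Subgroup.orderOf_dvd_natCard (P : Subgroup G) hx
      rcases (Nat.dvd_prime hp).1 this with h | h
      · exact absurd (orderOf_eq_one_iff.1 h) h1
      · exact h
  rw [hset, Finset.card_erase_of_mem (by simp)]
  congr 1
  rw [← Fintype.card_subtype, ← Nat.card_eq_fintype_card]
  exact hPc

/-- An element of order `pq` would generate the group and make it abelian. -/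
theorem orderOf_cases {p q : ℕ} (hp : p.Prime) (hq : q.Prime)
    (G : Type*) [Group G] [Fintype G] (hcard : Fintype.card G = p * q)
    (hnab : ∃ x y : G, x * y ≠ y * x) (x : G) :
    orderOf x ≠ p * q ∧ (orderOf x = 1 ∨ orderOf x = p ∨ orderOf x = q) := by
  have hne : orderOf x ≠ p * q := by
    intro h
    obtain ⟨y, z, hyz⟩ := hnab
    have htop : Subgroup.zpowers x = ⊤ := by
      apply Subgroup.eq_top_of_card_eq
      rw [Nat.card_zpowers, h, Nat.card_eq_fintype_card, hcard]
    have hc : ∀ g, g ∈ Subgroup.zpowers x := fun g => htop ▸ Subgroup.mem_top g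
    obtain ⟨a, rfl⟩ := Subgroup.mem_zpowers_iff.1 (hc y)
    obtain ⟨b, rfl⟩ := Subgroup.mem_zpowers_iff.1 (hc z)
    exact hyz (by rw [← zpow_add, ← zpow_add, add_comm])
  refine ⟨hne, ?_⟩
  have hd : orderOf x ∣ p * q := hcard ▸ orderOf_dvd_card
  obtain ⟨a, b, ha, hb, hab⟩ := exists_dvd_and_dvd_of_dvd_mul hd
  rcases (Nat.dvd_prime hp).1 ha with rfl | rfl <;> rcases (Nat.dvd_prime hq).1 hb with rfl | rfl
  · left; simpa using hab
  · right; right; simpa using hab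
  · right; left; simpa using hab
  · exact absurd hab hne

/-- Non-identity elements are adjacent exactly when they have the same order: commuting elements
of orders `p` and `q` would have a product of order `pq`. -/
theorem orderSuper_adj_iff {p q : ℕ} (hp : p.Prime) (hq : q.Prime) (hpq : p ≠ q)
    (G : Type*) [Group G] [Fintype G] (hcard : Fintype.card G = p * q)
    (hnab : ∃ x y : G, x * y ≠ y * x) (u v : G) :
    (orderSuper G).Adj u v ↔ u ≠ v ∧ (u = 1 ∨ v = 1 ∨ (orderOf u = p ↔ orderOf v = p)) := by
  have hcas := orderOf_cases hp hq G hcard hnab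
  have hno : ∀ x y : G, x * y = y * x → orderOf x = p → orderOf y = q → False := by
    intro x y hxy hx hy
    apply (hcas (x * y)).1
    rw [Commute.orderOf_mul_eq_mul_orderOf_of_coprime hxy, hx, hy]
    rw [hx, hy]; exact (Nat.coprime_primes hp hq).2 hpq
  rw [orderSuper, SimpleGraph.fromRel_adj]
  refine and_congr_right fun huv => ⟨fun h => ?_, fun h => ?_⟩
  · by_contra hcon
    push Not at hcon
    obtain ⟨hu, hv, hx⟩ := hcon
    have hu1 : orderOf u ≠ 1 := fun h => hu (orderOf_eq_one_iff.1 h)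
    have hv1 : orderOf v ≠ 1 := fun h => hv (orderOf_eq_one_iff.1 h)
    have hcu := (hcas u).2
    have hcv := (hcas v).2
    have key : (orderOf u = p ∧ orderOf v = q) ∨ (orderOf u = q ∧ orderOf v = p) := by tauto
    rcases key with ⟨h1, h2⟩ | ⟨h1, h2⟩ <;> rw [h1, h2] at h
    · rcases h with (h | ⟨x, y, -, hc, hx, hy⟩) | (h | ⟨x, y, -, hc, hx, hy⟩)
      · exact hpq h
      · exact hno x y hc hx hy
      · exact hpq h.symm
      · exact hno y x hc.symm hy hx
    · rcases h with (h | ⟨x, y, -, hc, hx, hy⟩) | (h | ⟨x, y, -, hc, hx, hy⟩)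
      · exact hpq h.symm
      · exact hno y x hc.symm hy hx
      · exact hpq h
      · exact hno x y hc hx hy
  · by_cases hu : u = 1
    · exact .inl (.inr ⟨u, v, huv, by simp [hu], rfl, rfl⟩)
    by_cases hv : v = 1
    · exact .inl (.inr ⟨u, v, huv, by simp [hv], rfl, rfl⟩)
    left; left
    have hu1 : orderOf u ≠ 1 := fun h => hu (orderOf_eq_one_iff.1 h)
    have hv1 : orderOf v ≠ 1 := fun h => hv (orderOf_eq_one_iff.1 h)
    have hcu := (hcas u).2
    have hcv := (hcas v).2
    by_cases h1 : orderOf u = p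
    · have : orderOf v = p := by tauto
      rw [h1, this]
    · have h3 : orderOf u = q := by tauto
      have : orderOf v = q := by tauto
      rw [h3, this]

/-- Laplacian spectrum of the order super commuting graph of a nonabelian group of order
`pq`, where `p, q` are distinct primes with `q ∣ p − 1`: the Laplacian eigenvalues are
exactly `0, 1, p, pq−p+1, pq` with multiplicities `1, 1, p−2, pq−p−1, 1`, i.e.
`χ(L(Δ^o(G)), x) = x (x−1) (x−p)^{p−2} (x−(pq−p+1))^{pq−p−1} (x−pq)`. -/
theorem stmt_13 (p q : ℕ) (hp : p.Prime) (hq : q.Prime) (hpq : p ≠ q) (hdvd : q ∣ p - 1)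
    (G : Type*) [Group G] [Fintype G] (hcard : Fintype.card G = p * q)
    (hnab : ∃ x y : G, x * y ≠ y * x) :
    (lapMat (orderSuper G)).charpoly =
      X * (X - 1) * (X - C (p : ℝ)) ^ (p - 2) *
        (X - C ((p : ℝ) * q - p + 1)) ^ (p * q - p - 1) * (X - C ((p : ℝ) * q)) := by
  have hp2 := hp.two_le
  have hq2 := hq.two_le
  have hle : q ≤ p - 1 := Nat.le_of_dvd (by omega) hdvd
  have hmul : p * 2 ≤ p * q := Nat.mul_le_mul_left p hq2
  have h := charpoly_two_cliques (orderSuper G) 1 (Finset.univ.filter fun x : G => orderOf x = p)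
    (by simpa using hp.ne_one.symm) (p - 2) (p * q - p - 1)
    (by rw [card_orderOf_eq_prime hp hq (by omega) G hcard]; omega)
    (by rw [hcard]; omega)
    (by simpa using orderSuper_adj_iff hp hq hpq G hcard hnab)
  have e1 : ((p - 2 : ℕ) : ℝ) = p - 2 := by rw [Nat.cast_sub hp2]; norm_num
  have e2 : ((p * q - p - 1 : ℕ) : ℝ) = (p : ℝ) * q - p - 1 := by
    rw [Nat.cast_sub (by omega), Nat.cast_sub (by omega)]; norm_num
  rw [h, e1, e2]
  congr 3
  · congr 4; ring
  · congr 2; ring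
  · ring
end
end

section
/- Let p and q be distinct primes with q dividing p − 1, and let G be a nonabelian group of order pq. Then the conjugacy super commuting graph Δ^c(G) is isomorphic to the generalized join K_{1,2}[K_1, K_{p−1}, K_{pq−p}], with K_1 placed at the central vertex of the star K_{1,2}. -/
/-!
Since `q < p`, a subgroup `P` of order `p` has the smallest prime factor `q` of `|G|` as its index,
so it is normal; it is also cyclic, hence abelian. The three blocks of the join are `{1}`,
`P \ {1}` and `G \ P`.

* `{1}` is joined to everything, because `1` commutes with every element, and `P \ {1}` is a clique
  because `P` is abelian.
* No nontrivial element of `P` commutes with an element outside `P` (`not_comm_of_mem_of_notMem`):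
  otherwise `G`, being generated by these two elements, would be abelian. As `P` is normal, this
  passes to conjugates, so there is no edge between `P \ {1}` and `G \ P`.
* Every `x ∉ P` satisfies `x ^ q = 1`, because `x ^ q` lies in `P` and commutes with `x`. Hence
  `⟨x⟩` is a Sylow `q`-subgroup, and by Sylow's second theorem a conjugate of `x` lies in `⟨y⟩` for
  any other `y ∉ P` (`exists_conj_mem_zpowers`). That conjugate commutes with `y`, so `G \ P` is a
  clique.
-/

open Polynomial

noncomputable section
open scoped Classical

section PQ

variable {G : Type*} [Group G] [Finite G] {p q : ℕ}

/-- A subgroup of order `p` in a group of order `pq` is maximal. -/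
lemma eq_top_of_le_of_mem (hp : p.Prime) (hq : q.Prime) (hcard : Nat.card G = p * q)
    {P H : Subgroup G} (hP : Nat.card P = p) (hle : P ≤ H) {v : G} (hvH : v ∈ H) (hvP : v ∉ P) :
    H = ⊤ := by
  obtain ⟨k, hk⟩ := Subgroup.card_dvd_of_le hle
  have hd := Subgroup.card_subgroup_dvd_card H
  rw [hcard, hk, hP] at hd
  rcases (Nat.dvd_prime hq).1 (Nat.dvd_of_mul_dvd_mul_left hp.pos hd) with h | h
  · refine absurd ?_ hvP
    rw [Subgroup.eq_of_le_of_card_ge hle (by rw [hk, h, mul_one])]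
    exact hvH
  · exact Subgroup.eq_top_of_card_eq _ (by rw [hk, hP, h, hcard])

lemma exists_normal_of_card (hp : p.Prime) (hq : q.Prime) (hlt : q < p)
    (hcard : Nat.card G = p * q) : ∃ P : Subgroup G, Nat.card P = p ∧ P.Normal := by
  have := Fact.mk hp
  obtain ⟨x, hx⟩ := exists_prime_orderOf_dvd_card' (G := G) p (hcard ▸ Dvd.intro _ rfl)
  have hP : Nat.card (Subgroup.zpowers x) = p := by rw [Nat.card_zpowers, hx]
  refine ⟨_, hP, Subgroup.normal_of_index_eq_minFac_card ?_⟩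
  have hi := Subgroup.card_mul_index (Subgroup.zpowers x)
  rw [hP, hcard] at hi
  rw [Nat.eq_of_mul_eq_mul_left hp.pos hi, hcard]
  refine le_antisymm ?_ (Nat.minFac_le_of_dvd hq.two_le (Dvd.intro_left _ rfl))
  have hm : (p * q).minFac.Prime := Nat.minFac_prime (by nlinarith [hp.two_le, hq.two_le])
  rcases hm.dvd_mul.1 (Nat.minFac_dvd (p * q)) with h | h
  · rw [(Nat.prime_dvd_prime_iff_eq hm hp).1 h]; exact hlt.le
  · rw [(Nat.prime_dvd_prime_iff_eq hm hq).1 h]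

lemma mul_comm_of_mem (hp : p.Prime) {P : Subgroup G} (hP : Nat.card P = p) {x y : G}
    (hx : x ∈ P) (hy : y ∈ P) : x * y = y * x := by
  have := Fact.mk hp
  have := isCyclic_of_prime_card hP
  have := IsCyclic.isMulCommutative (α := P)
  exact congrArg Subtype.val (mul_comm' (⟨x, hx⟩ : P) ⟨y, hy⟩)

/-- If `1 ≠ u ∈ P` commuted with `v ∉ P`, then `P = ⟨u⟩` and `v` would both be central, and they
generate `G`. -/
lemma not_comm_of_mem_of_notMem (hp : p.Prime) (hq : q.Prime) (hcard : Nat.card G = p * q)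
    (hnab : ∃ x y : G, x * y ≠ y * x) {P : Subgroup G} (hP : Nat.card P = p) {u v : G}
    (hu : u ∈ P) (hu1 : u ≠ 1) (hv : v ∉ P) : u * v ≠ v * u := by
  intro huv
  have := Fact.mk hp
  have hgen : ∀ w ∈ P, w * v = v * w := by
    intro w hw
    obtain ⟨k, hk⟩ := Subgroup.mem_zpowers_iff.1 <|
      mem_zpowers_of_prime_card (g := (⟨u, hu⟩ : P)) (g' := ⟨w, hw⟩) hP
        (fun h => hu1 (congrArg Subtype.val h))
    have hk' : u ^ k = w := congrArg Subtype.val hk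
    rw [← hk']
    exact (show Commute u v from huv).zpow_left k
  have hPc : P ≤ Subgroup.center G := by
    intro w hw
    have : Subgroup.centralizer {w} = ⊤ := by
      refine eq_top_of_le_of_mem hp hq hcard hP ?_ (v := v) ?_ hv
      · intro z hz
        rw [Subgroup.mem_centralizer_singleton_iff]
        exact mul_comm_of_mem hp hP hz hw
      · rw [Subgroup.mem_centralizer_singleton_iff]
        exact (hgen w hw).symm
    rw [Subgroup.mem_center_iff]
    intro g
    have hg : g ∈ Subgroup.centralizer {w} := this ▸ Subgroup.mem_top g
    exact Subgroup.mem_centralizer_singleton_iff.1 hg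
  have hvc : v ∈ Subgroup.center G := by
    have : Subgroup.centralizer {v} = ⊤ := by
      refine eq_top_of_le_of_mem hp hq hcard hP ?_ (v := v) ?_ hv
      · intro z hz
        rw [Subgroup.mem_centralizer_singleton_iff]
        exact hgen z hz
      · rw [Subgroup.mem_centralizer_singleton_iff]
    rw [Subgroup.mem_center_iff]
    intro g
    have hg : g ∈ Subgroup.centralizer {v} := this ▸ Subgroup.mem_top g
    exact Subgroup.mem_centralizer_singleton_iff.1 hg
  have htop := eq_top_of_le_of_mem hp hq hcard hP hPc hvc hv
  obtain ⟨x, y, hxy⟩ := hnab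
  have hy : y ∈ Subgroup.center G := htop ▸ Subgroup.mem_top y
  exact hxy (Subgroup.mem_center_iff.1 hy x)

lemma orderOf_eq_of_notMem (hp : p.Prime) (hq : q.Prime) (hcard : Nat.card G = p * q)
    (hnab : ∃ x y : G, x * y ≠ y * x) {P : Subgroup G} (hP : Nat.card P = p) [P.Normal] {x : G}
    (hx : x ∉ P) : orderOf x = q := by
  have := Fact.mk hq
  have hi := Subgroup.card_mul_index P
  rw [hP, hcard] at hi
  have hmem : x ^ q ∈ P := Nat.eq_of_mul_eq_mul_left hp.pos hi ▸ P.pow_index_mem x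
  refine orderOf_eq_prime ?_ (fun h => hx (h ▸ P.one_mem))
  by_contra h
  exact not_comm_of_mem_of_notMem hp hq hcard hnab hP hmem h hx (pow_mul_comm' x q)

lemma exists_conj_mem_zpowers (hq : q.Prime) (hp : p.Prime) (hpq : p ≠ q)
    (hcard : Nat.card G = p * q) {x y : G} (hx : orderOf x = q) (hy : orderOf y = q) :
    ∃ g : G, g * x * g⁻¹ ∈ Subgroup.zpowers y := by
  have := Fact.mk hq
  have hf : (Nat.card G).factorization q = 1 := by
    rw [hcard, Nat.factorization_mul hp.ne_zero hq.ne_zero, Finsupp.add_apply,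
      hq.factorization_self, Nat.factorization_eq_zero_of_not_dvd, zero_add]
    exact fun h => hpq ((Nat.prime_dvd_prime_iff_eq hq hp).1 h).symm
  let X : Sylow q G := Sylow.ofCard (Subgroup.zpowers x) (by rw [hf, Nat.card_zpowers, hx, pow_one])
  let Y : Sylow q G := Sylow.ofCard (Subgroup.zpowers y) (by rw [hf, Nat.card_zpowers, hy, pow_one])
  obtain ⟨g, hg⟩ := MulAction.exists_smul_eq G X Y
  refine ⟨g, ?_⟩
  have hmem : g * x * g⁻¹ ∈ ((g • X : Sylow q G) : Set G) := by
    rw [Sylow.coe_smul]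
    exact ⟨x, Subgroup.mem_zpowers x, rfl⟩
  rw [hg] at hmem
  exact hmem

end PQ

/-- The block of the join containing `x`: `0` for the identity, `1` for the other elements of `P`,
and `2` for the elements outside `P`. -/
def block {G : Type*} [Group G] (P : Subgroup G) (x : G) : Fin 3 :=
  if x = 1 then 0 else if x ∈ P then 1 else 2

/-- A graph is the generalized join `I[K_{n i}]` if its vertices split into blocks of sizes `n i`
such that distinct vertices are adjacent exactly when they share a block or their blocks are
adjacent in `I`. -/
lemma nonempty_iso_genJoinK {V ι : Type*} [Finite V] (Γ : SimpleGraph V) (I : SimpleGraph ι)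
    (n : ι → ℕ) (f : V → ι) (hf : ∀ i, Nat.card {x // f x = i} = n i)
    (hadj : ∀ x y, x ≠ y → (Γ.Adj x y ↔ f x = f y ∨ I.Adj (f x) (f y))) :
    Nonempty (Γ ≃g genJoinK I n) := by
  let e : V ≃ Σ i, Fin (n i) := (Equiv.sigmaFiberEquiv f).symm.trans
    (Equiv.sigmaCongrRight fun i => Finite.equivFinOfCardEq (hf i))
  have he : ∀ x, (e x).1 = f x := fun x => rfl
  refine ⟨⟨e, ?_⟩⟩
  intro x y
  simp only [genJoinK, SimpleGraph.fromRel_adj, he, ne_eq, EmbeddingLike.apply_eq_iff_eq]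
  by_cases hxy : x = y
  · simp [hxy]
  · rw [hadj x y hxy, eq_comm (a := f y), I.adj_comm (f y)]
    simp [hxy]

lemma card_block {G : Type*} [Group G] [Finite G] {p q : ℕ} (hcard : Nat.card G = p * q)
    {P : Subgroup G} (hP : Nat.card P = p) (i : Fin 3) :
    Nat.card {x // block P x = i} = (![1, p - 1, p * q - p] : Fin 3 → ℕ) i := by
  have hPn : (P : Set G).ncard = p := hP
  fin_cases i
  · have : {x | block P x = 0} = {1} := by
      ext x; simp only [block, Set.mem_ofPred_eq, Set.mem_singleton_iff]; split_ifs <;> simp_all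
    change Set.ncard {x | block P x = 0} = 1
    rw [this, Set.ncard_singleton]
  · have : {x | block P x = 1} = (P : Set G) \ {1} := by
      ext x
      simp only [block, Set.mem_ofPred_eq, Set.mem_sdiff, SetLike.mem_coe, Set.mem_singleton_iff]
      split_ifs <;> simp_all
    change Set.ncard {x | block P x = 1} = p - 1
    rw [this, Set.ncard_sdiff_singleton_of_mem P.one_mem, hPn]
  · have : {x | block P x = 2} = (P : Set G)ᶜ := by
      ext x
      simp only [block, Set.mem_ofPred_eq, Set.mem_compl_iff, SetLike.mem_coe]
      split_ifs with h1 h2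
      · simp [h1, P.one_mem]
      · simp [h2]
      · simp [h2]
    change Set.ncard {x | block P x = 2} = p * q - p
    rw [this, Set.ncard_compl, hPn, hcard]

/-- The conjugacy super commuting graph of a nonabelian group of order `pq`, with `p, q`
distinct primes such that `q ∣ p − 1`, is isomorphic to `K_{1,2}[K_1, K_{p−1}, K_{pq−p}]`,
with `K_1` at the central vertex of the star. -/
theorem stmt_16 (p q : ℕ) (hp : p.Prime) (hq : q.Prime) (hpq : p ≠ q) (hdvd : q ∣ p - 1)
    (G : Type*) [Group G] [Fintype G] (hcard : Fintype.card G = p * q)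
    (hnab : ∃ x y : G, x * y ≠ y * x) :
    Nonempty (conjSuper G ≃g genJoinK (starGraph 3) ![1, p - 1, p * q - p]) := by
  have hlt : q < p := by
    have := Nat.le_of_dvd (by have := hp.two_le; omega) hdvd
    have := hp.two_le
    omega
  have hcard' : Nat.card G = p * q := by rw [Nat.card_eq_fintype_card, hcard]
  obtain ⟨P, hP, hPn⟩ := exists_normal_of_card hp hq hlt hcard'
  refine nonempty_iso_genJoinK _ _ _ (block P) (card_block hcard' hP) ?_
  have hcomm : ∀ x y : G, x ≠ y → x * y = y * x → (conjSuper G).Adj x y := fun x y hxy h => by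
    rw [conjSuper, SimpleGraph.fromRel_adj]
    exact ⟨hxy, Or.inl (Or.inr ⟨x, y, hxy, h, IsConj.refl x, IsConj.refl y⟩)⟩
  have hconj : ∀ x x' : G, IsConj x x' → x ∈ P → x' ∈ P := fun x x' h hx => by
    obtain ⟨c, rfl⟩ := isConj_iff.1 h
    exact hPn.conj_mem x hx c
  have hsep : ∀ x y : G, x ∈ P → x ≠ 1 → y ∉ P → ¬ (conjSuper G).Adj x y := by
    intro x y hx hx1 hy hadj
    have key : ∀ x' y' : G, x' * y' = y' * x' → IsConj x x' → IsConj y y' → False := by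
      intro x' y' h hxx hyy
      refine not_comm_of_mem_of_notMem hp hq hcard' hnab hP (hconj _ _ hxx hx) ?_
        (fun h' => hy (hconj _ _ hyy.symm h')) h
      rintro rfl
      exact hx1 (isConj_one_left.1 hxx)
    rw [conjSuper, SimpleGraph.fromRel_adj] at hadj
    rcases hadj.2 with (h | ⟨x', y', -, h, h1, h2⟩) | (h | ⟨y', x', -, h, h2, h1⟩)
    · exact hy (hconj _ _ h hx)
    · exact key x' y' h h1 h2
    · exact hy (hconj _ _ h.symm hx)
    · exact key x' y' h.symm h1 h2
  have hout : ∀ x y : G, x ≠ y → x ∉ P → y ∉ P → (conjSuper G).Adj x y := by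
    intro x y hxy hx hy
    obtain ⟨g, hg⟩ := exists_conj_mem_zpowers hq hp hpq hcard'
      (orderOf_eq_of_notMem hp hq hcard' hnab hP hx) (orderOf_eq_of_notMem hp hq hcard' hnab hP hy)
    rw [conjSuper, SimpleGraph.fromRel_adj]
    refine ⟨hxy, Or.inl ?_⟩
    by_cases h : g * x * g⁻¹ = y
    · exact Or.inl (isConj_iff.2 ⟨g, h⟩)
    · refine Or.inr ⟨g * x * g⁻¹, y, h, ?_, isConj_iff.2 ⟨g, rfl⟩, IsConj.refl y⟩
      obtain ⟨k, hk⟩ := Subgroup.mem_zpowers_iff.1 hg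
      rw [← hk]
      exact (Commute.refl y).zpow_left k
  intro x y hxy
  by_cases hx1 : x = 1
  · have hy1 : y ≠ 1 := fun h => hxy (hx1.trans h.symm)
    have := hcomm x y hxy (by simp [hx1])
    rw [iff_true_left this]
    by_cases hy : y ∈ P <;> simp [block, hx1, hy1, hy, starGraph]
  by_cases hy1 : y = 1
  · have := hcomm x y hxy (by simp [hy1])
    rw [iff_true_left this]
    by_cases hx : x ∈ P <;> simp [block, hx1, hy1, hx, starGraph]
  by_cases hx : x ∈ P <;> by_cases hy : y ∈ P
  · simp [hcomm x y hxy (mul_comm_of_mem hp hP hx hy), block, hx1, hy1, hx, hy]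
  · simp [hsep x y hx hx1 hy, block, hx1, hy1, hx, hy, starGraph]
  · simp [mt (SimpleGraph.Adj.symm (G := conjSuper G)) (hsep y x hy hy1 hx), block, hx1, hy1, hx,
      hy, starGraph]
  · simp [hout x y hxy hx hy, block, hx1, hy1, hx, hy]
end
end

section
/- Let n ≥ 4 be even and let D_{2n} be the dihedral group of order 2n. Then the order super commuting graph Δ^o(D_{2n}) is the complete graph on 2n vertices, i.e., every pair of distinct elements of D_{2n} is adjacent in Δ^o(D_{2n}). -/
/-!
For even `n > 0` the rotation `r (n / 2)` has order `2`, like every reflection. Hence every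
element order of `D_{2n}` is attained by a rotation (`exists_orderOf_r_eq`). Rotations commute
with each other, so two elements of different orders are adjacent through rotations of these
orders, while elements of equal order are adjacent by definition.
-/

open Polynomial

noncomputable section
open scoped Classical

theorem exists_orderOf_r_eq {n : ℕ} (hn : 0 < n) (heven : Even n) (x : DihedralGroup n) :
    ∃ i : ZMod n, orderOf (DihedralGroup.r i) = orderOf x := by
  cases x with
  | r i => exact ⟨i, rfl⟩
  | sr i =>
    obtain ⟨m, rfl⟩ := heven
    refine ⟨(m : ZMod (m + m)), ?_⟩
    rw [DihedralGroup.orderOf_sr]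
    apply orderOf_eq_prime
    · rw [DihedralGroup.r_pow, DihedralGroup.one_def, ← Nat.cast_mul, mul_two,
        ZMod.natCast_self]
    · rw [DihedralGroup.one_def, Ne, DihedralGroup.r.injEq, ZMod.natCast_eq_zero_iff]
      intro h
      have := Nat.le_of_dvd (by omega) h
      omega

/-- For even `n ≥ 4`, the order super commuting graph of the dihedral group `D_{2n}` is
complete: every pair of distinct elements is adjacent. -/
theorem stmt_17 (n : ℕ) (hn : 4 ≤ n) (heven : Even n) :
    ∀ x y : DihedralGroup n, x ≠ y → (orderSuper (DihedralGroup n)).Adj x y := by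
  intro x y hxy
  rw [orderSuper, SimpleGraph.fromRel_adj]
  refine ⟨hxy, Or.inl ?_⟩
  by_cases h : orderOf x = orderOf y
  · exact Or.inl h
  · obtain ⟨i, hi⟩ := exists_orderOf_r_eq (by omega) heven x
    obtain ⟨j, hj⟩ := exists_orderOf_r_eq (by omega) heven y
    refine Or.inr ⟨.r i, .r j, ?_, ?_, hi, hj⟩
    · intro hij
      exact h (by rw [← hi, ← hj, hij])
    · rw [DihedralGroup.r_mul_r, DihedralGroup.r_mul_r, add_comm]
end
end

section
/- Let n ≥ 2 be even and let Q_{4n} be the generalized quaternion (dicyclic) group of order 4n. Then the order super commuting graph Δ^o(Q_{4n}) is the complete graph on 4n vertices, i.e., every pair of distinct elements of Q_{4n} is adjacent in Δ^o(Q_{4n}). -/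
/-!
Every element of `Q_{4n}` with `n` even has the same order as some power of `a`: the elements
outside `⟨a⟩` all have order `4`, and so does `a ^ (n / 2)` (`exists_orderOf_a_eq`). Given `x` and
`y`, choose powers of `a` with the same orders. They commute, and they are distinct unless
`o(x) = o(y)`, so `x` and `y` are adjacent in either case.
-/

open Polynomial

noncomputable section
open scoped Classical

/-- When `n` is even, the cyclic subgroup `⟨a⟩` realizes every element order of `Q_{4n}`. -/
theorem exists_orderOf_a_eq (n : ℕ) (hn : 2 ≤ n) (heven : Even n) (x : QuaternionGroup n) :
    ∃ i : ZMod (2 * n), orderOf (QuaternionGroup.a i : QuaternionGroup n) = orderOf x := by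
  have : NeZero n := ⟨by omega⟩
  obtain ⟨m, rfl⟩ := heven
  cases x with
  | a i => exact ⟨i, rfl⟩
  | xa i =>
    refine ⟨(m : ZMod (2 * (m + m))), ?_⟩
    rw [QuaternionGroup.orderOf_xa, QuaternionGroup.orderOf_a,
      ZMod.val_natCast_of_lt (by omega), show 2 * (m + m) = 4 * m by ring,
      Nat.gcd_mul_left_left, Nat.mul_div_cancel _ (by omega)]

/-- For even `n ≥ 2`, the order super commuting graph of the generalized quaternion group
`Q_{4n}` is complete: every pair of distinct elements is adjacent. -/
theorem stmt_18 (n : ℕ) (hn : 2 ≤ n) (heven : Even n) :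
    ∀ x y : QuaternionGroup n, x ≠ y → (orderSuper (QuaternionGroup n)).Adj x y := by
  intro x y hxy
  obtain ⟨i, hi⟩ := exists_orderOf_a_eq n hn heven x
  obtain ⟨j, hj⟩ := exists_orderOf_a_eq n hn heven y
  refine (SimpleGraph.fromRel_adj _ _ _).2 ⟨hxy, Or.inl ?_⟩
  by_cases h : orderOf x = orderOf y
  · exact Or.inl h
  · refine Or.inr ⟨.a i, .a j, fun hij => h ?_, ?_, hi, hj⟩
    · rw [← hi, ← hj, hij]
    · rw [QuaternionGroup.a_mul_a, QuaternionGroup.a_mul_a, add_comm]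
end
end

section
/- Let m ≥ 2. Then the conjugacy super commuting graph of the dihedral group D_{4m} of order 4m is isomorphic to the conjugacy super commuting graph of the generalized quaternion group Q_{4m} of order 4m: Δ^c(D_{4m}) ≅ Δ^c(Q_{4m}). -/
/-! The groups `D_{4m}` and `Q_{4m}` have the same multiplication on the normal form `x^ε a^i`,
except that in `Q_{4m}` a product of two elements outside `⟨a⟩` picks up the central involution
`a^m`. If `x` and `y` lie in the same coset of `⟨a⟩`, this factor occurs on both sides of
`c * x = y * c` or on neither; otherwise that equation fails in both groups. So the normal-form
bijection preserves and reflects `SemiconjBy` (`semiconj_iff_equivQuaternion`). It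
therefore preserves conjugacy and commutation, which determine the graph. -/

open Polynomial

noncomputable section
open scoped Classical

/-- The normal-form bijection `D_{4m} → Q_{4m}`, sending rotations to powers of `a`; it is not a
group homomorphism. -/
def equivQuaternion (m : ℕ) : DihedralGroup (2 * m) ≃ QuaternionGroup m where
  toFun
    | .r i => .a i
    | .sr i => .xa i
  invFun
    | .a i => .r i
    | .xa i => .sr i
  left_inv x := by cases x <;> rfl
  right_inv x := by cases x <;> rfl

theorem semiconj_iff_equivQuaternion (m : ℕ) (c x y : DihedralGroup (2 * m)) :
    equivQuaternion m c * equivQuaternion m x = equivQuaternion m y * equivQuaternion m c ↔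
      c * x = y * c := by
  rcases c with c | c <;> rcases x with x | x <;> rcases y with y | y <;>
    simp [equivQuaternion, add_sub_assoc]

theorem isConj_iff_equivQuaternion (m : ℕ) (x y : DihedralGroup (2 * m)) :
    IsConj (equivQuaternion m x) (equivQuaternion m y) ↔ IsConj x y := by
  simp only [isConj_iff, mul_inv_eq_iff_eq_mul, (equivQuaternion m).surjective.exists,
    semiconj_iff_equivQuaternion]

/-- For `m ≥ 2`, the conjugacy super commuting graph of the dihedral group `D_{4m}` is
isomorphic to the conjugacy super commuting graph of the generalized quaternion group
`Q_{4m}`. -/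
theorem stmt_19 (m : ℕ) (hm : 2 ≤ m) :
    Nonempty (conjSuper (DihedralGroup (2 * m)) ≃g conjSuper (QuaternionGroup m)) := by
  refine ⟨⟨equivQuaternion m, fun {x y} => ?_⟩⟩
  simp only [conjSuper, SimpleGraph.fromRel_adj, (equivQuaternion m).surjective.exists,
    isConj_iff_equivQuaternion, semiconj_iff_equivQuaternion, ne_eq,
    (equivQuaternion m).injective.eq_iff]
end
end
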